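/- arXiv:2309.07744 — 6 statements merged into one kernel-verified Lean document; each statement's English description precedes it below -/
import Mathlib

section
/- For every prime power q and every integer d ≥ 2, the point-hyperplane incidence graph I_{q,d} is ((q^d − 1)/(q − 1), q^{d−1})-regular: every point of 𝔽_q^d is incident to exactly (q^d − 1)/(q − 1) hyperplanes and every hyperplane contains exactly q^{d−1} points. Moreover, the second largest eigenvalue of the (real symmetric) adjacency matrix of I_{q,d} equals q^{(d−1)/2} (i.e., the square root of q^{d−1}). -/
open scoped Classical

noncomputable section

/-- A hyperplane in `𝔽_q^d` is a `(d-1)`-dimensional affine subspace. -/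
def IsHyperplane (F : Type*) [Field F] (d : ℕ) (π : AffineSubspace F (Fin d → F)) : Prop :=
  (π : Set (Fin d → F)).Nonempty ∧ Module.finrank F π.direction = d - 1

/-- The set of hyperplanes in `𝔽_q^d`. -/
def Hyp (F : Type*) [Field F] (d : ℕ) : Type _ :=
  {π : AffineSubspace F (Fin d → F) // IsHyperplane F d π}

instance (F : Type*) [Field F] [Fintype F] (d : ℕ) : Finite (Hyp F d) := by
  have h1 : Finite (AffineSubspace F (Fin d → F)) :=
    Finite.of_injective (fun π => (π : Set (Fin d → F))) SetLike.coe_injective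
  exact Subtype.finite

/-- Vertices of the point–hyperplane incidence graph: points ⊕ hyperplanes. -/
def Vtx (F : Type*) [Field F] (d : ℕ) : Type _ := (Fin d → F) ⊕ Hyp F d

instance (F : Type*) [Field F] [Fintype F] (d : ℕ) : Finite (Vtx F d) := by
  unfold Vtx; infer_instance

instance (F : Type*) [Field F] [Fintype F] (d : ℕ) : Fintype (Vtx F d) :=
  Fintype.ofFinite _

/-- The adjacency matrix of the point–hyperplane incidence graph `I_{q,d}`. -/
def adjA (F : Type*) [Field F] (d : ℕ) : Matrix (Vtx F d) (Vtx F d) ℝ :=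
  fun u v =>
    match u, v with
    | Sum.inl p, Sum.inr π => if p ∈ π.1 then 1 else 0
    | Sum.inr π, Sum.inl p => if p ∈ π.1 then 1 else 0
    | _, _ => 0

/-- The matrix whose `(u,v)`-entry is `1` iff exactly one of `u, v` is a point and the
other is a hyperplane. -/
def matB (F : Type*) [Field F] (d : ℕ) : Matrix (Vtx F d) (Vtx F d) ℝ :=
  fun u v =>
    match u, v with
    | Sum.inl _, Sum.inr _ => 1
    | Sum.inr _, Sum.inl _ => 1
    | _, _ => 0


/-- `μ` is an eigenvalue of the real matrix `A`. -/
def IsEigenvalue {V : Type*} [Fintype V] (A : Matrix V V ℝ) (μ : ℝ) : Prop :=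
  ∃ v : V → ℝ, v ≠ 0 ∧ A.mulVec v = μ • v

/-!
Let `N` be the point-hyperplane incidence matrix, so that the adjacency matrix is the block matrix
`[[0, N], [Nᵀ, 0]]`, whose nonzero eigenvalues are the `μ` with `μ²` an eigenvalue of `N Nᵀ`. The
`(p, p')` entry of `N Nᵀ` is the number of hyperplanes through `p` and `p'`, and it depends only on
whether `p = p'`: such hyperplanes correspond to lines in the space of linear forms vanishing on
`p' - p`. Hence `N Nᵀ = a I + b J`, with `J` the all-ones matrix, `a = q^(d-1)` and
`b = (q^(d-1) - 1) / (q - 1)`. Its eigenvalues are `a`, on the vectors of sum zero, and `a + b q^d`,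
on the constant vectors only; the latter is the product of the two vertex degrees.
-/

open Matrix LinearAlgebra.Projectivization

section Counting

variable {F V P : Type*} [Field F] [AddCommGroup V] [Module F V]

theorem finrank_dualAnnihilator_eq_one_iff [FiniteDimensional F V] (K : Submodule F V) :
    Module.finrank F K.dualAnnihilator = 1 ↔ Module.finrank F K + 1 = Module.finrank F V := by
  rw [← Subspace.finrank_add_finrank_dualAnnihilator_eq K, add_right_inj, eq_comm]

/-- The hyperplanes containing `W` correspond to the lines of linear forms vanishing on `W`, each
hyperplane being sent to its annihilator. -/
def hyperplanesContainingEquiv [FiniteDimensional F V] (W : Submodule F V) :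
    {K : Submodule F V // Module.finrank F K + 1 = Module.finrank F V ∧ W ≤ K} ≃
      ℙ F W.dualAnnihilator :=
  calc
    _ ≃ {L : Submodule F (Module.Dual F V) // L ≤ W.dualAnnihilator ∧ Module.finrank F L = 1} :=
      (Subspace.orderIsoFiniteDimensional.toEquiv.trans OrderDual.ofDual).subtypeEquiv fun K ↦
        and_comm.trans <| and_congr Subspace.dualAnnihilator_le_dualAnnihilator_iff.symm
          (finrank_dualAnnihilator_eq_one_iff K).symm
    _ ≃ {L : Set.Iic W.dualAnnihilator // Module.finrank F L.1 = 1} :=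
      (Equiv.subtypeSubtypeEquivSubtypeInter _ _).symm
    _ ≃ {L : Submodule F W.dualAnnihilator // Module.finrank F L = 1} :=
      (W.dualAnnihilator.mapIic.toEquiv.subtypeEquiv fun L ↦ by
        rw [OrderIso.coe_toEquiv, Submodule.coe_mapIic_apply,
          Submodule.finrank_map_subtype_eq]).symm
    _ ≃ ℙ F W.dualAnnihilator := (Projectivization.equivSubmodule F W.dualAnnihilator).symm

theorem ncard_hyperplanes_containing_mul [Finite F] [FiniteDimensional F V] (W : Submodule F V) :
    {K : Submodule F V | Module.finrank F K + 1 = Module.finrank F V ∧ W ≤ K}.ncard *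
        (Nat.card F - 1) =
      Nat.card F ^ (Module.finrank F V - Module.finrank F W) - 1 := by
  have hW := Subspace.finrank_add_finrank_dualAnnihilator_eq W
  rw [← Nat.card_coe_set_eq, Set.coe_ofPred, Nat.card_congr (hyperplanesContainingEquiv W),
    ← Projectivization.card, Module.natCard_eq_pow_finrank (K := F), ← hW, Nat.add_sub_cancel_left]

variable [AddTorsor V P]

theorem ncard_affineSubspaces_through_pair (S : Set (Submodule F V)) (p p' : P) :
    {π : AffineSubspace F P | π.direction ∈ S ∧ p ∈ π ∧ p' ∈ π}.ncard =
      {K | K ∈ S ∧ p' -ᵥ p ∈ K}.ncard := by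
  refine Set.ncard_congr (fun π _ ↦ π.direction) ?_ ?_ ?_
  · exact fun π ⟨hπ, hp, hp'⟩ ↦ ⟨hπ, AffineSubspace.vsub_mem_direction hp' hp⟩
  · exact fun π π' ⟨_, hp, _⟩ ⟨_, hp', _⟩ h ↦ AffineSubspace.ext_of_direction_eq h ⟨p, hp, hp'⟩
  · exact fun K ⟨hK, hp'⟩ ↦ ⟨AffineSubspace.mk' p K, ⟨by rwa [AffineSubspace.direction_mk'],
      AffineSubspace.self_mem_mk' p K, AffineSubspace.mem_mk'.2 hp'⟩,
      AffineSubspace.direction_mk' p K⟩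

theorem ncard_affineSubspace [Finite F] [FiniteDimensional F V] {π : AffineSubspace F P}
    (hπ : (π : Set P).Nonempty) :
    (π : Set P).ncard = Nat.card F ^ Module.finrank F π.direction := by
  obtain ⟨p, hp⟩ := hπ
  have : Nonempty π := ⟨p, hp⟩
  rw [← Module.natCard_eq_pow_finrank, ← Nat.card_coe_set_eq]
  exact (Nat.card_congr (Equiv.vaddConst (⟨p, hp⟩ : π))).symm

end Counting

section Hyp

variable {F : Type*} [Field F] {d : ℕ}

theorem ncard_hyp_through_pair_mul [Finite F] (hd : d ≠ 0) (p p' : Fin d → F) :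
    {π : Hyp F d | p ∈ π.1 ∧ p' ∈ π.1}.ncard * (Nat.card F - 1) =
      Nat.card F ^ (d - Module.finrank F (F ∙ (p' - p))) - 1 := by
  have hinj : Function.Injective fun π : Hyp F d ↦ π.1 := Subtype.val_injective
  have hcodim (K : Submodule F (Fin d → F)) :
      Module.finrank F K + 1 = Module.finrank F (Fin d → F) ↔ Module.finrank F K = d - 1 := by
    rw [Module.finrank_fin_fun]; lia
  have himage : (fun π : Hyp F d ↦ π.1) '' {π | p ∈ π.1 ∧ p' ∈ π.1} =
      {π | π.direction ∈ {K : Submodule F (Fin d → F) |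
        Module.finrank F K + 1 = Module.finrank F (Fin d → F)} ∧ p ∈ π ∧ p' ∈ π} := by
    ext π
    simp only [Set.mem_image, Set.mem_ofPred_eq, hcodim]
    exact ⟨fun ⟨σ, hp, hσ⟩ ↦ hσ ▸ ⟨σ.2.2, hp⟩,
      fun ⟨hπ, hp, hp'⟩ ↦ ⟨⟨π, ⟨p, hp⟩, hπ⟩, ⟨hp, hp'⟩, rfl⟩⟩
  rw [← Set.ncard_image_of_injective _ hinj, himage, ncard_affineSubspaces_through_pair]
  simpa [Submodule.span_singleton_le_iff_mem] using
    ncard_hyperplanes_containing_mul (F ∙ (p' - p))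

theorem ncard_hyp_through [Finite F] (hd : d ≠ 0) (p : Fin d → F) :
    {π : Hyp F d | p ∈ π.1}.ncard = (Nat.card F ^ d - 1) / (Nat.card F - 1) := by
  have hq : 1 < Nat.card F := Finite.one_lt_card
  have h := ncard_hyp_through_pair_mul hd p p
  rw [sub_self, Submodule.span_zero_singleton, finrank_bot, Nat.sub_zero] at h
  simp only [and_self] at h
  rw [← h, Nat.mul_div_cancel _ (by lia)]

end Hyp

section Spectrum

variable {m n : Type*} [Fintype m] [Fintype n]

/-- The adjacency matrix of the bipartite graph whose biadjacency matrix is `N`. -/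
def bipartiteAdj (N : Matrix m n ℝ) : Matrix (m ⊕ n) (m ⊕ n) ℝ :=
  fromBlocks 0 N Nᵀ 0

theorem bipartiteAdj_mulVec_eq_smul_iff {N : Matrix m n ℝ} {μ : ℝ} {v : m ⊕ n → ℝ} :
    bipartiteAdj N *ᵥ v = μ • v ↔
      N *ᵥ (v ∘ Sum.inr) = μ • (v ∘ Sum.inl) ∧ Nᵀ *ᵥ (v ∘ Sum.inl) = μ • (v ∘ Sum.inr) := by
  simp only [bipartiteAdj, fromBlocks_mulVec, zero_mulVec, zero_add, add_zero, funext_iff,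
    Sum.forall, Sum.elim_inl, Sum.elim_inr, Pi.smul_apply, Function.comp_apply]

theorem mul_transpose_mulVec_inl {N : Matrix m n ℝ} {μ : ℝ} {v : m ⊕ n → ℝ}
    (hv : bipartiteAdj N *ᵥ v = μ • v) :
    (N * Nᵀ) *ᵥ (v ∘ Sum.inl) = μ ^ 2 • (v ∘ Sum.inl) := by
  obtain ⟨hl, hr⟩ := bipartiteAdj_mulVec_eq_smul_iff.1 hv
  rw [← mulVec_mulVec, hr, mulVec_smul, hl, smul_smul, sq]

theorem eq_zero_of_bipartiteAdj_mulVec {N : Matrix m n ℝ} {μ : ℝ} (hμ : μ ≠ 0) {v : m ⊕ n → ℝ}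
    (hv : bipartiteAdj N *ᵥ v = μ • v) (hl : v ∘ Sum.inl = 0) : v = 0 := by
  have hr := (bipartiteAdj_mulVec_eq_smul_iff.1 hv).2
  rw [hl, mulVec_zero, eq_comm, smul_eq_zero_iff_right hμ] at hr
  rw [← Sum.elim_comp_inl_inr v, hl, hr, Sum.elim_zero_zero]

theorem isEigenvalue_bipartiteAdj_iff {N : Matrix m n ℝ} {μ : ℝ} (hμ : μ ≠ 0) :
    IsEigenvalue (bipartiteAdj N) μ ↔ IsEigenvalue (N * Nᵀ) (μ ^ 2) := by
  constructor
  · rintro ⟨v, hv0, hv⟩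
    exact ⟨v ∘ Sum.inl, mt (eq_zero_of_bipartiteAdj_mulVec hμ hv) hv0, mul_transpose_mulVec_inl hv⟩
  · rintro ⟨x, hx0, hx⟩
    refine ⟨Sum.elim x (μ⁻¹ • Nᵀ *ᵥ x), fun h ↦ hx0 ?_, bipartiteAdj_mulVec_eq_smul_iff.2 ⟨?_, ?_⟩⟩
    · rw [← Sum.elim_comp_inl x (μ⁻¹ • Nᵀ *ᵥ x), h]; rfl
    · rw [Sum.elim_comp_inl, Sum.elim_comp_inr, mulVec_smul, mulVec_mulVec, hx, smul_smul, sq,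
        inv_mul_cancel_left₀ hμ]
    · rw [Sum.elim_comp_inl, Sum.elim_comp_inr, smul_inv_smul₀ hμ]

section AllOnes

/-- The all-ones matrix, usually denoted `J`. -/
def allOnes (m : Type*) : Matrix m m ℝ :=
  of fun _ _ ↦ 1

variable [DecidableEq m] {a b c : ℝ}

theorem smul_one_add_smul_allOnes_mulVec_apply (a b : ℝ) (x : m → ℝ) (i : m) :
    ((a • (1 : Matrix m m ℝ) + b • allOnes m) *ᵥ x) i = a * x i + b * ∑ j, x j := by
  have hJ : (allOnes m *ᵥ x) i = ∑ j, x j := by simp [allOnes, mulVec, dotProduct]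
  simp [add_mulVec, smul_mulVec, hJ]

theorem isEigenvalue_smul_one_add_smul_allOnes_iff [Nontrivial m] :
    IsEigenvalue (a • (1 : Matrix m m ℝ) + b • allOnes m) c ↔
      c = a ∨ c = a + b * Fintype.card m := by
  constructor
  · rintro ⟨x, hx0, hx⟩
    have hcoord (i : m) : a * x i + b * ∑ j, x j = c * x i := by
      rw [← smul_one_add_smul_allOnes_mulVec_apply, hx, Pi.smul_apply, smul_eq_mul]
    by_cases hsum : ∑ j, x j = 0
    · obtain ⟨i, hi⟩ := Function.ne_iff.1 hx0
      left
      exact mul_right_cancel₀ hi (by linear_combination b * hsum - hcoord i)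
    · right
      have htotal := Finset.sum_congr rfl fun i (_ : i ∈ Finset.univ) ↦ hcoord i
      rw [Finset.sum_add_distrib, ← Finset.mul_sum, Finset.sum_const, ← Finset.mul_sum,
        Finset.card_univ, nsmul_eq_mul] at htotal
      exact mul_right_cancel₀ hsum (by linear_combination -htotal)
  · rintro (rfl | rfl)
    · obtain ⟨i, j, hij⟩ := exists_pair_ne m
      refine ⟨Pi.single i 1 - Pi.single j 1, fun h ↦ ?_, funext fun k ↦ ?_⟩
      · simpa [hij] using congrFun h i
      · simp [smul_one_add_smul_allOnes_mulVec_apply]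
    · refine ⟨1, one_ne_zero, funext fun k ↦ ?_⟩
      simp [smul_one_add_smul_allOnes_mulVec_apply]

theorem apply_eq_apply_of_allOnes_eigenvector (hb : b ≠ 0) {x : m → ℝ}
    (hx : (a • (1 : Matrix m m ℝ) + b • allOnes m) *ᵥ x = (a + b * Fintype.card m) • x)
    (i j : m) : x i = x j := by
  have : Nonempty m := ⟨i⟩
  have hcoord (i : m) : Fintype.card m * x i = ∑ j, x j := by
    have hi := congrFun hx i
    rw [smul_one_add_smul_allOnes_mulVec_apply, Pi.smul_apply, smul_eq_mul] at hi
    exact mul_left_cancel₀ hb (by linear_combination -hi)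
  exact mul_left_cancel₀ (Nat.cast_ne_zero.2 Fintype.card_ne_zero)
    ((hcoord i).trans (hcoord j).symm)

theorem isEigenvalue_bipartiteAdj_iff_of_mul_transpose [Nontrivial m] {N : Matrix m n ℝ} {μ : ℝ}
    (hN : N * Nᵀ = a • 1 + b • allOnes m) (hμ : μ ≠ 0) :
    IsEigenvalue (bipartiteAdj N) μ ↔ μ ^ 2 = a ∨ μ ^ 2 = a + b * Fintype.card m := by
  rw [isEigenvalue_bipartiteAdj_iff hμ, hN, isEigenvalue_smul_one_add_smul_allOnes_iff]

theorem eq_sqrt_or_le_sqrt_of_isEigenvalue_bipartiteAdj [Nontrivial m] {N : Matrix m n ℝ} {μ : ℝ}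
    (hN : N * Nᵀ = a • 1 + b • allOnes m) (hμ : IsEigenvalue (bipartiteAdj N) μ) :
    μ = √(a + b * Fintype.card m) ∨ μ ≤ √a := by
  obtain hneg | hpos := le_or_gt μ 0
  · exact .inr (hneg.trans (Real.sqrt_nonneg a))
  · obtain h | h := (isEigenvalue_bipartiteAdj_iff_of_mul_transpose hN hpos.ne').1 hμ
    · exact .inr (by rw [← h, Real.sqrt_sq hpos.le])
    · exact .inl (by rw [← h, Real.sqrt_sq hpos.le])

theorem not_linearIndependent_pair_of_mul_transpose [Nonempty m] {N : Matrix m n ℝ} {μ : ℝ}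
    (hN : N * Nᵀ = a • 1 + b • allOnes m) (hb : b ≠ 0) (hμ : μ ≠ 0)
    (hμ2 : μ ^ 2 = a + b * Fintype.card m) {v w : m ⊕ n → ℝ}
    (hv : bipartiteAdj N *ᵥ v = μ • v) (hw : bipartiteAdj N *ᵥ w = μ • w) :
    ¬ LinearIndependent ℝ ![v, w] := by
  obtain ⟨i⟩ := ‹Nonempty m›
  have eq_zero {u : m ⊕ n → ℝ} (hu : bipartiteAdj N *ᵥ u = μ • u) (hui : u (Sum.inl i) = 0) :
      u = 0 := by
    refine eq_zero_of_bipartiteAdj_mulVec hμ hu (funext fun j ↦ ?_)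
    have hul := mul_transpose_mulVec_inl hu
    rw [hN, hμ2] at hul
    exact (apply_eq_apply_of_allOnes_eigenvector hb hul j i).trans hui
  intro hli
  have hcomb : w (Sum.inl i) • v + -v (Sum.inl i) • w = 0 := by
    refine eq_zero ?_ ?_
    · rw [mulVec_add, mulVec_smul, mulVec_smul, hv, hw, smul_add, smul_comm μ, smul_comm μ]
    · simp [mul_comm]
  exact hli.ne_zero 1 (eq_zero hw (LinearIndependent.pair_iff.1 hli _ _ hcomb).1)

end AllOnes

end Spectrum

section Incidence

variable {F : Type*} [Field F] {d : ℕ}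

instance [Fintype F] : Fintype (Hyp F d) := Fintype.ofFinite _

/-- The point-hyperplane incidence matrix, with rows indexed by points. -/
def incidenceMatrix (F : Type*) [Field F] (d : ℕ) : Matrix (Fin d → F) (Hyp F d) ℝ :=
  of fun p π ↦ if p ∈ π.1 then 1 else 0

theorem adjA_eq_bipartiteAdj : adjA F d = bipartiteAdj (incidenceMatrix F d) := by
  funext u v
  rcases u with p | π <;> rcases v with p' | π' <;> rfl

theorem adjA_mulVec [Fintype F] (v : Vtx F d → ℝ) :
    (adjA F d).mulVec v = bipartiteAdj (incidenceMatrix F d) *ᵥ v := by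
  rw [adjA_eq_bipartiteAdj]
  funext u
  exact Finset.sum_congr (congrArg (@Finset.univ _) (Subsingleton.elim _ _)) fun _ _ ↦ rfl

theorem isEigenvalue_adjA_iff [Fintype F] {μ : ℝ} :
    IsEigenvalue (adjA F d) μ ↔ IsEigenvalue (bipartiteAdj (incidenceMatrix F d)) μ := by
  simp only [IsEigenvalue, adjA_mulVec]
  rfl

variable [Fintype F]

theorem incidenceMatrix_mul_transpose_apply (p p' : Fin d → F) :
    (incidenceMatrix F d * (incidenceMatrix F d)ᵀ) p p' =
      {π : Hyp F d | p ∈ π.1 ∧ p' ∈ π.1}.ncard := by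
  simp [mul_apply, incidenceMatrix, ← ite_and, Finset.sum_boole, Set.ncard_eq_toFinset_card',
    and_comm]

theorem incidenceMatrix_mul_transpose (hd : d ≠ 0) :
    incidenceMatrix F d * (incidenceMatrix F d)ᵀ =
      ((Nat.card F : ℝ) ^ (d - 1)) • 1 +
        (((Nat.card F : ℝ) ^ (d - 1) - 1) / (Nat.card F - 1)) • allOnes (Fin d → F) := by
  have hq : 1 < Nat.card F := Finite.one_lt_card
  have hq' : (Nat.card F : ℝ) - 1 ≠ 0 := sub_ne_zero.2 (by exact_mod_cast hq.ne')
  ext p p'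
  have hcount := ncard_hyp_through_pair_mul hd p p'
  have hpow := Nat.one_le_pow (d - Module.finrank F (F ∙ (p' - p))) _ (Nat.zero_lt_of_lt hq)
  rify [hq.le, hpow, ← incidenceMatrix_mul_transpose_apply] at hcount
  rw [eq_div_of_mul_eq hq' hcount]
  obtain rfl | hne := eq_or_ne p p'
  · rw [sub_self, Submodule.span_zero_singleton, finrank_bot, Nat.sub_zero]
    obtain ⟨k, rfl⟩ := Nat.exists_eq_succ_of_ne_zero hd
    simp only [Matrix.add_apply, Matrix.smul_apply, one_apply_eq, allOnes, of_apply, smul_eq_mul,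
      mul_one, Nat.succ_eq_add_one, Nat.add_sub_cancel]
    field_simp
    ring
  · rw [finrank_span_singleton (sub_ne_zero.2 hne.symm)]
    simp [allOnes, hne]

theorem degree_mul_degree_eq (hd : d ≠ 0) :
    ((Nat.card F : ℝ) ^ d - 1) / (Nat.card F - 1) * (Nat.card F : ℝ) ^ (d - 1) =
      (Nat.card F : ℝ) ^ (d - 1) +
        ((Nat.card F : ℝ) ^ (d - 1) - 1) / (Nat.card F - 1) * Fintype.card (Fin d → F) := by
  have hq : (Nat.card F : ℝ) - 1 ≠ 0 := sub_ne_zero.2 (by exact_mod_cast Finite.one_lt_card.ne')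
  obtain ⟨k, rfl⟩ := Nat.exists_eq_succ_of_ne_zero hd
  rw [← Nat.card_eq_fintype_card (α := Fin _ → F), Nat.card_fun, Nat.card_fin, Nat.cast_pow,
    Nat.succ_eq_add_one, Nat.add_sub_cancel]
  field_simp
  ring

end Incidence

/-- The point–hyperplane incidence graph `I_{q,d}` is
`((q^d−1)/(q−1), q^{d−1})`-regular, and the second largest eigenvalue of its adjacency
matrix equals `√(q^{d−1})`.  The largest eigenvalue is `λ₁ = √((q^d−1)/(q−1) · q^{d−1})`;
"second largest eigenvalue equals `√(q^{d−1})`" is expressed by: `λ₁` is an eigenvalue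
bounding all others, its eigenspace is one-dimensional, `√(q^{d−1})` is an eigenvalue, and
every eigenvalue is either `λ₁` or at most `√(q^{d−1})`. -/
theorem incidence_graph_regular_and_second_eigenvalue
    (q d : ℕ) (hq : IsPrimePow q) (hd : 2 ≤ d)
    (F : Type) [Field F] [Fintype F] (hF : Fintype.card F = q) :
    (∀ p : Fin d → F, {π : Hyp F d | p ∈ π.1}.ncard = (q ^ d - 1) / (q - 1)) ∧
    (∀ π : Hyp F d, ((π.1 : Set (Fin d → F))).ncard = q ^ (d - 1)) ∧
    (IsEigenvalue (adjA F d)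
        (Real.sqrt ((((q : ℝ) ^ d - 1) / ((q : ℝ) - 1)) * (q : ℝ) ^ (d - 1))) ∧
      (∀ μ : ℝ, IsEigenvalue (adjA F d) μ →
        μ ≤ Real.sqrt ((((q : ℝ) ^ d - 1) / ((q : ℝ) - 1)) * (q : ℝ) ^ (d - 1))) ∧
      (∀ v w : Vtx F d → ℝ,
        (adjA F d).mulVec v =
          Real.sqrt ((((q : ℝ) ^ d - 1) / ((q : ℝ) - 1)) * (q : ℝ) ^ (d - 1)) • v →
        (adjA F d).mulVec w =
          Real.sqrt ((((q : ℝ) ^ d - 1) / ((q : ℝ) - 1)) * (q : ℝ) ^ (d - 1)) • w →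
        ¬ LinearIndependent ℝ ![v, w]) ∧
      IsEigenvalue (adjA F d) (Real.sqrt ((q : ℝ) ^ (d - 1))) ∧
      (∀ μ : ℝ, IsEigenvalue (adjA F d) μ →
        μ = Real.sqrt ((((q : ℝ) ^ d - 1) / ((q : ℝ) - 1)) * (q : ℝ) ^ (d - 1)) ∨
          μ ≤ Real.sqrt ((q : ℝ) ^ (d - 1)))) := by
  have hd0 : d ≠ 0 := by lia
  obtain rfl : Nat.card F = q := Nat.card_eq_fintype_card.trans hF
  have hq1 : (1 : ℝ) < Nat.card F := by exact_mod_cast Finite.one_lt_card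
  have hN := incidenceMatrix_mul_transpose (F := F) hd0
  have hQ : (1 : ℝ) < (Nat.card F : ℝ) ^ (d - 1) := one_lt_pow₀ hq1 (by lia)
  have hb : 0 < ((Nat.card F : ℝ) ^ (d - 1) - 1) / (Nat.card F - 1) :=
    div_pos (sub_pos.2 hQ) (sub_pos.2 hq1)
  have hle := le_add_of_nonneg_right (a := (Nat.card F : ℝ) ^ (d - 1))
    (mul_nonneg hb.le (Nat.cast_nonneg (Fintype.card (Fin d → F))))
  have ha : 0 < (Nat.card F : ℝ) ^ (d - 1) := zero_lt_one.trans hQ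
  have hL := ha.trans_le hle
  have : NeZero d := ⟨hd0⟩
  simp only [degree_mul_degree_eq hd0, isEigenvalue_adjA_iff, adjA_mulVec]
  refine ⟨ncard_hyp_through hd0, fun π ↦ π.2.2 ▸ ncard_affineSubspace π.2.1,
    (isEigenvalue_bipartiteAdj_iff_of_mul_transpose hN (Real.sqrt_pos.2 hL).ne').2
      (.inr (Real.sq_sqrt hL.le)), fun μ hμ ↦ ?_, fun v w hv hw ↦ ?_,
    (isEigenvalue_bipartiteAdj_iff_of_mul_transpose hN (Real.sqrt_pos.2 ha).ne').2
      (.inl (Real.sq_sqrt ha.le)), fun μ ↦ eq_sqrt_or_le_sqrt_of_isEigenvalue_bipartiteAdj hN⟩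
  · exact (eq_sqrt_or_le_sqrt_of_isEigenvalue_bipartiteAdj hN hμ).elim le_of_eq
      (·.trans (Real.sqrt_le_sqrt hle))
  · exact not_linearIndependent_pair_of_mul_transpose hN hb.ne' (Real.sqrt_pos.2 hL).ne'
      (Real.sq_sqrt hL.le) hv hw

end
end

section
/- For every integer d ≥ 2, every prime power q, and every nonempty finite point set P ⊆ 𝔽_q^d, the number of hyperplanes π of 𝔽_q^d such that |π ∩ P| does not lie in the interval [|P|/(2q), 2|P|/q] is at most 8q^{d+1}/|P|. -/
/-!
Choose a linear functional `f` on `V = 𝔽_q^d` and a value `t` uniformly at random, and let `N` be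
the number of points of `P` with `f x = t`. Distinct points of `V` are identified by exactly one
functional in `q`, so the points of `P` lie on the level set pairwise independently and the second
moment of `N - |P| / q` can be computed exactly: summed over all pairs `(f, t)`, the squared
deviation is `|P| q^d (1 - 1 / q)`. Every hyperplane is the level set of at least `q - 1` pairs,
namely the scalar multiples of any one of its equations, so Chebyshev's inequality bounds the
number of hyperplanes with deviation at least `δ` by `|P| q^(d - 1) / δ ^ 2`. An intersection
outside the given interval deviates from its mean by at least `δ = |P| / (2 q)`.
-/

section Fibers

open Finset

lemma sum_card_fiber_sq {α β : Type*} [Fintype β] [DecidableEq β] (s : Finset α) (g : α → β) :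
    ∑ t, #{x ∈ s | g x = t} ^ 2 = #{xy ∈ s ×ˢ s | g xy.1 = g xy.2} := by
  rw [card_eq_sum_card_fiberwise (f := fun xy => g xy.1) (t := univ) (fun _ _ => mem_univ _)]
  refine sum_congr rfl fun t _ => ?_
  rw [sq, ← card_product, ← filter_product, filter_filter]
  congr 1 with xy
  grind

lemma sum_sq_card_fiber_sub_mean {α β : Type*} [Fintype β] [Nonempty β] [DecidableEq β]
    (s : Finset α) (g : α → β) :
    ∑ t, ((#{x ∈ s | g x = t} : ℝ) - #s / Fintype.card β) ^ 2 =
      #{xy ∈ s ×ˢ s | g xy.1 = g xy.2} - (#s : ℝ) ^ 2 / Fintype.card β := by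
  have first_moment : ∑ t, (#{x ∈ s | g x = t} : ℝ) = #s := by
    exact_mod_cast (card_eq_sum_card_fiberwise (f := g) (t := univ) fun _ _ => mem_univ _).symm
  have second_moment : ∑ t, (#{x ∈ s | g x = t} : ℝ) ^ 2 =
      #{xy ∈ s ×ˢ s | g xy.1 = g xy.2} := by
    exact_mod_cast sum_card_fiber_sq s g
  simp only [sub_sq, sum_add_distrib, sum_sub_distrib, ← sum_mul, ← mul_sum, first_moment,
    second_moment, sum_const, card_univ, nsmul_eq_mul]
  field_simp
  ring

end Fibers

section Functionals

open Finset Module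

variable {F V : Type*} [Field F] [AddCommGroup V] [Module F V]

lemma natCard_ker_mul_natCard {f : Dual F V} (hf : f ≠ 0) :
    Nat.card (LinearMap.ker f) * Nat.card F = Nat.card V := by
  rw [Submodule.card_eq_card_quotient_mul_card (LinearMap.ker f),
    Nat.card_congr (f.quotKerEquivOfSurjective (LinearMap.surjective hf)).toEquiv]

lemma card_functionals_agreeing_mul_card [Fintype F] [DecidableEq F] [Fintype (Dual F V)]
    {x y : V} (hxy : x ≠ y) :
    #{f : Dual F V | f x = f y} * Fintype.card F = Fintype.card (Dual F V) := by
  have eval_ne_zero : Dual.eval F V (x - y) ≠ 0 := by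
    rw [Ne, eval_apply_eq_zero_iff]
    exact sub_ne_zero.2 hxy
  have h := natCard_ker_mul_natCard eval_ne_zero
  rwa [Nat.card_eq_fintype_card (α := F), Nat.card_eq_fintype_card (α := Dual F V),
    Nat.subtype_card {f : Dual F V | f x = f y} (by simp [sub_eq_zero])] at h

lemma sum_card_agreeing_pairs [Fintype F] [DecidableEq F] [Fintype (Dual F V)] (P : Finset V) :
    ∑ f : Dual F V, (#{xy ∈ P ×ˢ P | f xy.1 = f xy.2} : ℝ) =
      #P * Fintype.card (Dual F V) +
        #P * (#P - 1) * (Fintype.card (Dual F V) / Fintype.card F) := by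
  classical
  have swap : ∑ f : Dual F V, (#{xy ∈ P ×ˢ P | f xy.1 = f xy.2} : ℝ) =
      ∑ xy ∈ P ×ˢ P, (#{f : Dual F V | f xy.1 = f xy.2} : ℝ) := by
    exact_mod_cast sum_card_bipartiteAbove_eq_sum_card_bipartiteBelow
      fun (f : Dual F V) (xy : V × V) => f xy.1 = f xy.2
  have diagonal : ∑ xy ∈ P.diag, (#{f : Dual F V | f xy.1 = f xy.2} : ℝ) =
      #P * Fintype.card (Dual F V) := by
    simp
  have off_diagonal : ∑ xy ∈ P.offDiag, (#{f : Dual F V | f xy.1 = f xy.2} : ℝ) =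
      #P * (#P - 1) * (Fintype.card (Dual F V) / Fintype.card F) := by
    rw [sum_congr rfl (g := fun _ => (Fintype.card (Dual F V) / Fintype.card F : ℝ)), sum_const,
      offDiag_card, nsmul_eq_mul, Nat.cast_sub (Nat.le_mul_self _), Nat.cast_mul, mul_sub_one]
    intro xy hxy
    rw [eq_div_iff (by simp)]
    exact_mod_cast card_functionals_agreeing_mul_card (mem_offDiag.1 hxy).2.2
  rw [swap, ← diag_union_offDiag, sum_union (disjoint_diag_offDiag P), diagonal, off_diagonal]

lemma sum_sq_card_level_sub_mean [Fintype F] [DecidableEq F] [Fintype (Dual F V)]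
    (P : Finset V) :
    ∑ a : Dual F V × F, ((#{x ∈ P | a.1 x = a.2} : ℝ) - #P / Fintype.card F) ^ 2 =
      #P * Fintype.card (Dual F V) / Fintype.card F * (Fintype.card F - 1) := by
  simp only [Fintype.sum_prod_type, sum_sq_card_fiber_sub_mean, sum_sub_distrib,
    sum_card_agreeing_pairs, sum_const, card_univ, nsmul_eq_mul]
  field_simp
  ring

end Functionals

section Hyperplanes

open Finset Module

variable {F V : Type*} [Field F] [AddCommGroup V] [Module F V]

lemma finite_affineSubspace [Finite F] [FiniteDimensional F V] :
    Finite (AffineSubspace F V) :=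
  have : Finite V := Module.finite_of_finite F
  .of_injective _ SetLike.coe_injective

/-- A hyperplane of a vector space of any dimension: a nonempty affine subspace whose direction
is a maximal proper subspace. -/
def IsAffineHyperplane (π : AffineSubspace F V) : Prop :=
  (π : Set V).Nonempty ∧ IsCoatom π.direction

lemma isHyperplane_iff_isAffineHyperplane {d : ℕ} (hd : d ≠ 0)
    (π : AffineSubspace F (Fin d → F)) : IsHyperplane F d π ↔ IsAffineHyperplane π := by
  have codim := π.direction.finrank_quotient_add_finrank
  rw [finrank_fin_fun] at codim
  rw [IsHyperplane, IsAffineHyperplane, ← isSimpleModule_iff_isCoatom,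
    isSimpleModule_iff_finrank_eq_one]
  grind

/-- The affine subspace `{x | f x = t}`, which is a hyperplane when `f ≠ 0`. -/
def affineLevelSet (f : Dual F V) (t : F) : AffineSubspace F V :=
  (AffineSubspace.mk' t ⊥).comap f.toAffineMap

@[simp]
lemma mem_affineLevelSet {f : Dual F V} {t : F} {x : V} : x ∈ affineLevelSet f t ↔ f x = t := by
  simp [affineLevelSet, sub_eq_zero]

lemma ncard_affineLevelSet_inter [DecidableEq F] (f : Dual F V) (t : F) (P : Finset V) :
    ((affineLevelSet f t : Set V) ∩ P).ncard = #{x ∈ P | f x = t} := by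
  rw [← Set.ncard_coe_finset]
  congr 1 with x
  simp [and_comm]

lemma affineLevelSet_smul {c : F} (hc : c ≠ 0) (f : Dual F V) (t : F) :
    affineLevelSet (c • f) (c * t) = affineLevelSet f t := by
  ext x
  simp [hc]

lemma IsAffineHyperplane.exists_eq_affineLevelSet {π : AffineSubspace F V}
    (hπ : IsAffineHyperplane π) : ∃ f : Dual F V, f ≠ 0 ∧ ∃ t, π = affineLevelSet f t := by
  obtain ⟨⟨p, hp⟩, hcoatom⟩ := hπ
  obtain ⟨f, hf, hle⟩ := Submodule.exists_le_ker_of_lt_top _ hcoatom.lt_top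
  have direction_eq : LinearMap.ker f = π.direction :=
    (hcoatom.le_iff.1 hle).resolve_left (mt LinearMap.ker_eq_top.1 hf)
  refine ⟨f, hf, f p, ?_⟩
  ext x
  rw [mem_affineLevelSet, ← AffineSubspace.vsub_right_mem_direction_iff_mem hp, ← direction_eq,
    LinearMap.mem_ker, vsub_eq_sub, map_sub, sub_eq_zero]

open Classical in
lemma IsAffineHyperplane.card_sub_one_le_card_equations [Fintype F] [Fintype (Dual F V)]
    {π : AffineSubspace F V} (hπ : IsAffineHyperplane π) :
    Fintype.card F - 1 ≤ #{a : Dual F V × F | affineLevelSet a.1 a.2 = π} := by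
  obtain ⟨f, hf, t, rfl⟩ := hπ.exists_eq_affineLevelSet
  rw [← Fintype.card_units, ← card_univ]
  refine card_le_card_of_injOn (fun c : Fˣ => ((c : F) • f, (c : F) * t)) ?_ ?_
  · intro c _
    simp [affineLevelSet_smul c.ne_zero]
  · intro c _ c' _ h
    exact Units.ext (smul_left_injective F hf (Prod.ext_iff.1 h).1)

open Classical in
lemma card_hyperplanes_mul_le_card_equations [Fintype F] [Fintype (Dual F V)]
    {S : Finset (AffineSubspace F V)} (hS : ∀ π ∈ S, IsAffineHyperplane π) :
    (Fintype.card F - 1) * #S ≤ #{a : Dual F V × F | affineLevelSet a.1 a.2 ∈ S} := by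
  set E : Finset (Dual F V × F) := {a | affineLevelSet a.1 a.2 ∈ S} with hE
  have maps_to : ∀ a ∈ E, affineLevelSet a.1 a.2 ∈ S := fun a ha => (mem_filter.1 ha).2
  refine mul_card_image_le_card_of_maps_to maps_to _ fun π hπ => ?_
  refine (hS π hπ).card_sub_one_le_card_equations.trans (card_le_card fun a => ?_)
  simp +contextual [hE, hπ]

end Hyperplanes

section Deviation

open Finset Module

variable {F V : Type*} [Field F] [Fintype F] [AddCommGroup V] [Module F V]

open Classical in
lemma card_deviating_levels_mul_sq_le [Fintype (Dual F V)] (P : Finset V) {δ : ℝ} (hδ : 0 ≤ δ) :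
    #{a : Dual F V × F | δ ≤ |(#{x ∈ P | a.1 x = a.2} : ℝ) - #P / Fintype.card F|} * δ ^ 2 ≤
      #P * Fintype.card (Dual F V) / Fintype.card F * (Fintype.card F - 1) := by
  rw [← sum_sq_card_level_sub_mean, ← nsmul_eq_mul]
  refine (card_nsmul_le_sum _ _ _ fun a ha => ?_).trans
    (sum_le_sum_of_subset_of_nonneg (filter_subset _ _) fun _ _ _ => sq_nonneg _)
  rw [← sq_abs (_ - _)]
  exact pow_le_pow_left₀ hδ (mem_filter.1 ha).2 2

theorem ncard_deviating_hyperplanes_mul_sq_le [FiniteDimensional F V] (P : Finset V) {δ : ℝ}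
    (hδ : 0 ≤ δ) :
    ({π : AffineSubspace F V | IsAffineHyperplane π ∧
        δ ≤ |(((π : Set V) ∩ P).ncard : ℝ) - #P / Fintype.card F|}.ncard : ℝ) * δ ^ 2 ≤
      #P * (Fintype.card F : ℝ) ^ finrank F V / Fintype.card F := by
  classical
  have : Finite (AffineSubspace F V) := finite_affineSubspace
  have : Finite (Dual F V) := Module.finite_of_finite F
  have : Fintype (Dual F V) := .ofFinite _
  set S := {π : AffineSubspace F V | IsAffineHyperplane π ∧
    δ ≤ |(((π : Set V) ∩ P).ncard : ℝ) - #P / Fintype.card F|}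
  have one_lt_q : (1 : ℝ) < Fintype.card F := by exact_mod_cast Fintype.one_lt_card
  have card_dual : Fintype.card (Dual F V) = Fintype.card F ^ finrank F V := by
    rw [card_eq_pow_finrank (K := F), Subspace.dual_finrank_eq]
  have multiplicity : ((Fintype.card F : ℝ) - 1) * S.ncard ≤
      #{a : Dual F V × F | δ ≤ |(#{x ∈ P | a.1 x = a.2} : ℝ) - #P / Fintype.card F|} := by
    rw [← Nat.cast_pred Fintype.card_pos, Set.ncard_eq_toFinset_card S]
    norm_cast
    refine (card_hyperplanes_mul_le_card_equations (by simp +contextual [S])).trans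
      (card_le_card fun a => ?_)
    simp +contextual [S, ncard_affineLevelSet_inter]
  have chebyshev := card_deviating_levels_mul_sq_le (F := F) P hδ
  rw [card_dual, Nat.cast_pow] at chebyshev
  refine le_of_mul_le_mul_right ?_ (sub_pos.2 one_lt_q)
  calc S.ncard * δ ^ 2 * (Fintype.card F - 1)
      = (Fintype.card F - 1) * S.ncard * δ ^ 2 := by ring
    _ ≤ _ := mul_le_mul_of_nonneg_right multiplicity (sq_nonneg δ)
    _ ≤ _ := chebyshev

end Deviation

lemma half_le_abs_sub_of_notMem_Icc {x m : ℝ} (hx : x ∉ Set.Icc (m / 2) (2 * m)) :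
    m / 2 ≤ |x - m| := by
  rw [le_abs]
  grind

theorem few_hyperplanes_with_atypical_intersection_general {F V : Type*} [Field F] [Fintype F]
    [AddCommGroup V] [Module F V] [FiniteDimensional F V] (P : Finset V) (hP : P.Nonempty) :
    ({π : AffineSubspace F V | IsAffineHyperplane π ∧
        ¬ ((((π : Set V) ∩ ↑P).ncard : ℝ) ∈
            Set.Icc ((P.card : ℝ) / (2 * Fintype.card F))
              (2 * (P.card : ℝ) / Fintype.card F))}.ncard : ℝ)
      ≤ 4 * (Fintype.card F : ℝ) ^ (Module.finrank F V + 1) / (P.card : ℝ) := by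
  have : Finite (AffineSubspace F V) := finite_affineSubspace
  have card_P_pos : (0 : ℝ) < P.card := by exact_mod_cast hP.card_pos
  have q_pos : (0 : ℝ) < Fintype.card F := by exact_mod_cast Fintype.card_pos
  set μ : ℝ := P.card / Fintype.card F with hμ
  have μ_pos : 0 < μ := div_pos card_P_pos q_pos
  rw [mul_comm 2 (Fintype.card F : ℝ), ← div_div, mul_div_assoc, ← hμ]
  calc _ ≤ ({π : AffineSubspace F V | IsAffineHyperplane π ∧
          μ / 2 ≤ |(((π : Set V) ∩ P).ncard : ℝ) - μ|}.ncard : ℝ) :=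
        Nat.cast_le.2 <| Set.ncard_le_ncard fun π hπ =>
          ⟨hπ.1, half_le_abs_sub_of_notMem_Icc hπ.2⟩
    _ ≤ P.card * (Fintype.card F : ℝ) ^ Module.finrank F V / Fintype.card F / (μ / 2) ^ 2 :=
        (le_div_iff₀ (pow_pos (half_pos μ_pos) 2)).2 <|
          ncard_deviating_hyperplanes_mul_sq_le P (half_pos μ_pos).le
    _ = 4 * (Fintype.card F : ℝ) ^ (Module.finrank F V + 1) / P.card := by
        rw [hμ]
        field_simp
        ring

/-- For every nonempty `P ⊆ 𝔽_q^d`, the number of hyperplanes `π` with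
`|π ∩ P| ∉ [|P|/(2q), 2|P|/q]` is at most `8q^{d+1}/|P|`. -/
theorem few_hyperplanes_with_atypical_intersection
    (q d : ℕ) (hq : IsPrimePow q) (hd : 2 ≤ d)
    (F : Type) [Field F] [Fintype F] (hF : Fintype.card F = q)
    (P : Finset (Fin d → F)) (hP : P.Nonempty) :
    (({π : AffineSubspace F (Fin d → F) | IsHyperplane F d π ∧
        ¬ ((((π : Set (Fin d → F)) ∩ ↑P).ncard : ℝ) ∈
            Set.Icc ((P.card : ℝ) / (2 * q)) (2 * (P.card : ℝ) / q))}).ncard : ℝ)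
      ≤ 8 * (q : ℝ) ^ (d + 1) / (P.card : ℝ) := by
  subst hF
  simp only [isHyperplane_iff_isAffineHyperplane (by lia : d ≠ 0)]
  refine (few_hyperplanes_with_atypical_intersection_general P hP).trans ?_
  rw [Module.finrank_fin_fun]
  gcongr
  norm_num
end

section
/- There exist an absolute constant c > 0 and a threshold Q such that for every prime power q ≥ Q there is a collection 𝒞 of subsets (containers) of 𝔽_q² satisfying: (i) every general position subset of 𝔽_q² is contained in some member of 𝒞; (ii) |C| ≤ 9q for every C ∈ 𝒞; and (iii) |𝒞| ≤ 2^{c · q^{1/2} · (log q)²}, where log is base 2. -/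
/-- A set `P ⊆ 𝔽_q^d` is in general position if every `(d+1)`-element subset of `P`
is affinely independent (equivalently, no `d+1` points of `P` lie in a common
hyperplane). -/
def IsGenPos (F : Type*) [Field F] (d : ℕ) (P : Set (Fin d → F)) : Prop :=
  ∀ s : Finset (Fin d → F), (↑s : Set (Fin d → F)) ⊆ P → s.card = d + 1 →
    AffineIndependent F ((↑) : s → (Fin d → F))

/-!
Fix a finite set `S` of about `√q` points of a cap `P`, a set with no three collinear points. The
rest of `P` lies off the secants of `S` and is independent in the graph joining two points that are
collinear with a point of `S`. The lines through a fixed `s ∈ S` number at most `2q`, so by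
Cauchy–Schwarz they induce a quadratic number of collinear pairs on every set of more than `4q`
points; off the secants of `S`, the pairs found for different `s` are different, so such a set has a
vertex of relative degree at least `#S / 4q`. The Kleitman–Winston algorithm then covers the
independent sets by few sets of size `4q + O(√q log q)`.

In dimension `d + 1` the number of lines through a point is still at most `2q ^ d`, and the same
argument applies to caps with `q ^ d` in place of `q`.
-/

open Finset Module
open scoped LinearAlgebra.Projectivization

section KleitmanWinston

variable {V : Type*} {G : SimpleGraph V}

/-- `𝓕` is a family of containers for the independent sets of `G` inside the vertex set `U`: each
of them lies in a member of `𝓕`, and the members have at most `b` elements. -/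
structure IsContainerFamily (G : SimpleGraph V) (U : Finset V) (b : ℝ) (𝓕 : Finset (Finset V)) :
    Prop where
  exists_subset : ∀ I ⊆ U, G.IsIndepSet (I : Set V) → ∃ C ∈ 𝓕, I ⊆ C
  card_le : ∀ C ∈ 𝓕, (#C : ℝ) ≤ b

theorem isContainerFamily_singleton {U : Finset V} {b : ℝ} (hU : #U ≤ b) :
    IsContainerFamily G U b {U} where
  exists_subset _ hI _ := ⟨U, mem_singleton_self U, hI⟩
  card_le := by simpa only [mem_singleton, forall_eq] using hU

-- An independent set either avoids `v`, or contains `v` and then no neighbour of `v`.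
theorem IsContainerFamily.union_image_insert [DecidableEq V] [DecidableRel G.Adj]
    {U : Finset V} {v : V} {b : ℝ} {𝓕₁ 𝓕₂ : Finset (Finset V)}
    (h₁ : IsContainerFamily G (U.erase v) (b + 1) 𝓕₁)
    (h₂ : IsContainerFamily G {w ∈ U.erase v | ¬ G.Adj v w} b 𝓕₂) :
    IsContainerFamily G U (b + 1) (𝓕₁ ∪ 𝓕₂.image (insert v)) where
  exists_subset I hIU hI := by
    by_cases hv : v ∈ I
    · have hsub : I.erase v ⊆ {w ∈ U.erase v | ¬ G.Adj v w} := fun w hw ↦ by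
        obtain ⟨hwv, hw⟩ := mem_erase.mp hw
        exact mem_filter.mpr ⟨mem_erase.mpr ⟨hwv, hIU hw⟩, hI hv hw hwv.symm⟩
      obtain ⟨C, hC, hIC⟩ := h₂.exists_subset _ hsub (hI.mono (erase_subset v I))
      exact ⟨insert v C, mem_union_right _ (mem_image_of_mem _ hC), subset_insert_iff.mpr hIC⟩
    · obtain ⟨C, hC, hIC⟩ := h₁.exists_subset I (subset_erase.mpr ⟨hIU, hv⟩) hI
      exact ⟨C, mem_union_left _ hC, hIC⟩
  card_le C hC := by
    obtain hC | hC := mem_union.mp hC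
    · exact h₁.card_le C hC
    · obtain ⟨D, hD, rfl⟩ := mem_image.mp hC
      calc (#(insert v D) : ℝ) ≤ #D + 1 := by exact_mod_cast card_insert_le v D
        _ ≤ b + 1 := by gcongr; exact h₂.card_le D hD

theorem card_filter_not_adj_le [DecidableRel G.Adj] {A : Finset V} {v : V} {β : ℝ}
    (hv : β * #A ≤ #{w ∈ A | G.Adj v w}) :
    (#{w ∈ A | ¬ G.Adj v w} : ℝ) ≤ #A * (1 - β) := by
  have hsplit : (#{w ∈ A | G.Adj v w} : ℝ) + #{w ∈ A | ¬ G.Adj v w} = #A := by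
    exact_mod_cast card_filter_add_card_filter_not (s := A) (G.Adj v)
  linarith

theorem pow_succ_add_pow_le {a b : ℕ} (hba : b ≤ a) (t : ℕ) :
    a ^ (t + 1) + b ^ t ≤ (a + 1) ^ (t + 1) :=
  calc a ^ (t + 1) + b ^ t ≤ a ^ (t + 1) + a ^ t := by gcongr
    _ = a ^ t * (a + 1) := by ring
    _ ≤ (a + 1) ^ t * (a + 1) := by gcongr; exact Nat.le_succ a
    _ = (a + 1) ^ (t + 1) := (pow_succ _ _).symm

-- Kleitman–Winston: whenever the branch with `v` is taken, the surviving vertex set shrinks by a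
-- factor `1 - β`, so that this happens at most `t` times.
theorem exists_isContainerFamily [DecidableRel G.Adj] {m β : ℝ} (hβ : β ≤ 1) {U : Finset V}
    (hdense : ∀ A ⊆ U, m < #A → ∃ v ∈ A, β * #A ≤ #{w ∈ A | G.Adj v w}) {t : ℕ}
    (ht : #U * (1 - β) ^ t ≤ m) :
    ∃ 𝓕, IsContainerFamily G U (m + t) 𝓕 ∧ #𝓕 ≤ (#U + 1) ^ t := by
  classical
  induction U using Finset.strongInduction generalizing t with | H U ih
  obtain hU | hU := le_or_gt (#U : ℝ) m
  · refine ⟨{U}, isContainerFamily_singleton (by linarith [t.cast_nonneg (α := ℝ)]), ?_⟩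
    simpa only [card_singleton] using Nat.one_le_pow _ _ (Nat.succ_pos _)
  obtain ⟨v, hvU, hv⟩ := hdense U Subset.rfl hU
  obtain _ | t := t
  · exact absurd ht (by simpa only [pow_zero, mul_one, not_le] using hU)
  have : 0 ≤ 1 - β := sub_nonneg.mpr hβ
  have hUv : U.erase v ⊂ U := erase_ssubset hvU
  set W := {w ∈ U.erase v | ¬ G.Adj v w}
  have hWUv : W ⊆ U.erase v := filter_subset _ _
  have hWcard : (#W : ℝ) ≤ #U * (1 - β) := by
    refine (card_filter_not_adj_le hv).trans' ?_
    gcongr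
    exact filter_subset_filter _ hUv.subset
  have ht₁ : #(U.erase v) * (1 - β) ^ (t + 1) ≤ m := ht.trans' (by gcongr)
  have ht₂ : #W * (1 - β) ^ t ≤ m := ht.trans' (by rw [pow_succ', ← mul_assoc]; gcongr)
  obtain ⟨𝓕₁, hcont₁, hcard₁⟩ := ih _ hUv (fun A hA ↦ hdense A (hA.trans hUv.subset)) ht₁
  obtain ⟨𝓕₂, hcont₂, hcard₂⟩ := ih W (hWUv.trans_ssubset hUv)
    (fun A hA ↦ hdense A (hA.trans (hWUv.trans hUv.subset))) ht₂
  rw [Nat.cast_succ, ← add_assoc] at hcont₁ ⊢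
  refine ⟨_, hcont₁.union_image_insert hcont₂, ?_⟩
  calc #(𝓕₁ ∪ 𝓕₂.image (insert v)) ≤ #𝓕₁ + #𝓕₂ :=
        (card_union_le _ _).trans (Nat.add_le_add_left card_image_le _)
    _ ≤ (#(U.erase v) + 1) ^ (t + 1) + (#W + 1) ^ t := by gcongr
    _ ≤ (#(U.erase v) + 1 + 1) ^ (t + 1) := pow_succ_add_pow_le (by gcongr) t
    _ = (#U + 1) ^ (t + 1) := by rw [card_erase_add_one hvU]

end KleitmanWinston

theorem sq_card_le_card_image_mul_sum_card_fiber {α ι : Type*} [DecidableEq ι] (A : Finset α)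
    (f : α → ι) : #A ^ 2 ≤ #(A.image f) * ∑ a ∈ A, #{b ∈ A | f b = f a} :=
  calc #A ^ 2 = (∑ i ∈ A.image f, #{b ∈ A | f b = i}) ^ 2 := by rw [← card_eq_sum_card_image f A]
    _ ≤ #(A.image f) * ∑ i ∈ A.image f, #{b ∈ A | f b = i} ^ 2 := sq_sum_le_card_mul_sum_sq
    _ = #(A.image f) * ∑ a ∈ A, #{b ∈ A | f b = f a} := by
        rw [sum_comp (fun i ↦ #{b ∈ A | f b = i}) f]
        simp only [smul_eq_mul, sq]

section Pencils

variable {F V : Type*} [Field F] [AddCommGroup V] [Module F V]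

theorem collinear_of_span_sub_eq {s v w : V} (h : F ∙ (w - s) = F ∙ (v - s)) :
    Collinear F {s, v, w} := by
  obtain ⟨r, hr⟩ := Submodule.mem_span_singleton.mp
    (h ▸ Submodule.mem_span_singleton_self (w - s) : w - s ∈ F ∙ (v - s))
  refine (collinear_iff_of_mem (p₀ := s) (Set.mem_insert s _)).mpr ⟨v - s, ?_⟩
  simp only [Set.mem_insert_iff, Set.mem_singleton_iff, forall_eq_or_imp, forall_eq, vadd_eq_add]
  exact ⟨⟨0, by simp⟩, ⟨1, by simp⟩, ⟨r, by simp [hr]⟩⟩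

theorem collinear_of_collinear_of_collinear {s s' v w : V} (hvw : v ≠ w)
    (h : Collinear F {s, v, w}) (h' : Collinear F {s', v, w}) : Collinear F {s, s', v} := by
  have hmem {x : V} (hx : Collinear F {x, v, w}) : x ∈ line[F, v, w] :=
    hx.mem_affineSpan_of_mem_of_ne (by simp) (by simp) (by simp) hvw
  exact collinear_triple_of_mem_affineSpan_pair (hmem h) (hmem h') (left_mem_affineSpan_pair F v w)

open scoped Classical in
theorem card_image_span_sub_le [Finite V] {s : V} {A : Finset V} (hs : s ∉ A) :
    #(A.image fun x ↦ F ∙ (x - s)) ≤ Nat.card (ℙ F V) := by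
  have hrank : ∀ H ∈ A.image fun x ↦ F ∙ (x - s), finrank F H = 1 := by
    simp only [mem_image, forall_exists_index, and_imp, forall_apply_eq_imp_iff₂]
    exact fun x hx ↦ finrank_span_singleton (sub_ne_zero.mpr (ne_of_mem_of_not_mem hx hs))
  calc #(A.image fun x ↦ F ∙ (x - s))
      = Nat.card (A.image fun x ↦ F ∙ (x - s)) := (Nat.card_eq_finsetCard _).symm
    _ ≤ Nat.card {H : Submodule F V // finrank F H = 1} :=
        Nat.card_le_card_of_injective (Subtype.map id hrank)
          (Subtype.map_injective hrank Function.injective_id)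
    _ = Nat.card (ℙ F V) := Nat.card_congr (Projectivization.equivSubmodule F V).symm

open scoped Classical in
theorem sq_card_le_mul_sum_card_collinear [Finite V] {s : V} {A : Finset V} (hs : s ∉ A) {N : ℕ}
    (hN : Nat.card (ℙ F V) ≤ N) (hA : 2 * N ≤ #A) :
    #A ^ 2 ≤ 2 * N * ∑ v ∈ A, #{w ∈ A | v ≠ w ∧ Collinear F {s, v, w}} := by
  have hfiber (v : V) : #{w ∈ A | F ∙ (w - s) = F ∙ (v - s)} ≤
      #{w ∈ A | v ≠ w ∧ Collinear F {s, v, w}} + 1 := by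
    refine (card_le_card fun w hw ↦ ?_).trans (card_insert_le v _)
    obtain ⟨hwA, hw⟩ := mem_filter.mp hw
    simp only [mem_insert, mem_filter]
    exact (eq_or_ne w v).imp_right fun hwv ↦ ⟨hwA, hwv.symm, collinear_of_span_sub_eq hw⟩
  have hsum : #A ^ 2 ≤ N * (∑ v ∈ A, #{w ∈ A | v ≠ w ∧ Collinear F {s, v, w}} + #A) :=
    calc #A ^ 2 ≤ #(A.image fun x ↦ F ∙ (x - s)) * ∑ v ∈ A, #{w ∈ A | F ∙ (w - s) = F ∙ (v - s)} :=
          sq_card_le_card_image_mul_sum_card_fiber A _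
      _ ≤ N * ∑ v ∈ A, (#{w ∈ A | v ≠ w ∧ Collinear F {s, v, w}} + 1) := by
          gcongr with v
          · exact (card_image_span_sub_le hs).trans hN
          · exact hfiber v
      _ = N * (∑ v ∈ A, #{w ∈ A | v ≠ w ∧ Collinear F {s, v, w}} + #A) := by
          rw [sum_add_distrib, card_eq_sum_ones]
  nlinarith

/-- Two points are joined when they lie on a common line through a point of `S`. A set with no three
collinear points that contains `S` is independent in this graph away from `S`. -/
def pencilGraph (F : Type*) [Field F] [Module F V] (S : Finset V) : SimpleGraph V where
  Adj v w := v ≠ w ∧ ∃ s ∈ S, Collinear F {s, v, w}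
  symm := ⟨fun v w ⟨hvw, s, hs, h⟩ ↦ ⟨hvw.symm, s, hs, by rwa [Set.pair_comm w v]⟩⟩
  loopless := ⟨fun _ h ↦ h.1 rfl⟩

/-- The points outside `S` that lie on no line through two points of `S`. -/
def offSecants (F : Type*) [Field F] [Module F V] (S : Finset V) : Set V :=
  {x | x ∉ S ∧ ∀ s ∈ S, ∀ s' ∈ S, s ≠ s' → ¬ Collinear F {s, s', x}}

open scoped Classical in
theorem sum_card_collinear_le_card_adj {S A : Finset V} (hA : ↑A ⊆ offSecants F S) {v : V}
    (hv : v ∈ A) :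
    ∑ s ∈ S, #{w ∈ A | v ≠ w ∧ Collinear F {s, v, w}} ≤ #{w ∈ A | (pencilGraph F S).Adj v w} := by
  rw [← card_biUnion]
  · refine card_le_card (biUnion_subset.mpr fun s hs w hw ↦ ?_)
    obtain ⟨hwA, hvw, hw⟩ := mem_filter.mp hw
    exact mem_filter.mpr ⟨hwA, hvw, s, hs, hw⟩
  · intro s hs s' hs' hss'
    refine disjoint_left.mpr fun w hw hw' ↦ ?_
    obtain ⟨-, hvw, hw⟩ := mem_filter.mp hw
    obtain ⟨-, -, hw'⟩ := mem_filter.mp hw'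
    exact (hA hv).2 s hs s' hs' hss' (collinear_of_collinear_of_collinear hvw hw hw')

open scoped Classical in
theorem exists_mul_card_le_card_adj [Finite V] {S A : Finset V} (hA : ↑A ⊆ offSecants F S) {N : ℕ}
    (hN : Nat.card (ℙ F V) ≤ N) (hNA : 2 * N < #A) :
    ∃ v ∈ A, (#S / (2 * N) : ℝ) * #A ≤ #{w ∈ A | (pencilGraph F S).Adj v w} := by
  have hsum : #S * #A ^ 2 ≤ 2 * N * ∑ v ∈ A, #{w ∈ A | (pencilGraph F S).Adj v w} :=
    calc #S * #A ^ 2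
        ≤ ∑ s ∈ S, 2 * N * ∑ v ∈ A, #{w ∈ A | v ≠ w ∧ Collinear F {s, v, w}} := by
          rw [← smul_eq_mul]
          exact card_nsmul_le_sum _ _ _ fun s hs ↦
            sq_card_le_mul_sum_card_collinear (fun hsA ↦ (hA hsA).1 hs) hN hNA.le
      _ = 2 * N * ∑ v ∈ A, ∑ s ∈ S, #{w ∈ A | v ≠ w ∧ Collinear F {s, v, w}} := by
          rw [← mul_sum, sum_comm]
      _ ≤ 2 * N * ∑ v ∈ A, #{w ∈ A | (pencilGraph F S).Adj v w} := by
          gcongr with v hv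
          exact sum_card_collinear_le_card_adj hA hv
  refine exists_le_of_sum_le (card_pos.mp (by lia)) ?_
  calc ∑ _v ∈ A, (#S / (2 * N) : ℝ) * #A = #S * #A ^ 2 / (2 * N) := by
        rw [sum_const, nsmul_eq_mul]
        ring
    _ ≤ ∑ v ∈ A, (#{w ∈ A | (pencilGraph F S).Adj v w} : ℝ) := by
        refine div_le_of_le_mul₀ (by positivity) (by positivity) ?_
        rw [mul_comm (∑ _ ∈ _, _)]
        exact_mod_cast hsum

end Pencils

section Caps

variable {F V : Type*} [Field F] [AddCommGroup V] [Module F V]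

/-- A cap: a set of points no three of which are collinear. For sets in the plane this is general
position. -/
def IsCap (F : Type*) [Field F] [Module F V] (P : Set V) : Prop :=
  ∀ ⦃a⦄, a ∈ P → ∀ ⦃b⦄, b ∈ P → ∀ ⦃c⦄, c ∈ P → a ≠ b → a ≠ c → b ≠ c → ¬ Collinear F {a, b, c}

theorem IsGenPos.isCap {P : Set (Fin 2 → F)} (hP : IsGenPos F 2 P) : IsCap F P := by
  classical
  intro a ha b hb c hc hab hac hbc
  have hsub : (({a, b, c} : Finset (Fin 2 → F)) : Set (Fin 2 → F)) ⊆ P := by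
    simp [Set.insert_subset_iff, ha, hb, hc]
  have hind := hP {a, b, c} hsub (card_eq_three.mpr ⟨a, b, c, hab, hac, hbc, rfl⟩)
  rw [← affineIndependent_iff_not_collinear_set]
  refine AffineIndependent.of_set_of_injective ?_ ?_
  · have hrange : Set.range ![a, b, c] = ({a, b, c} : Finset (Fin 2 → F)) := by
      simp only [Matrix.range_cons, Matrix.range_empty, Set.union_empty, Set.singleton_union,
        coe_insert, coe_singleton]
    rw [hrange]
    exact hind
  · intro i j
    fin_cases i <;> fin_cases j <;> simp [hab, hac, hbc, hab.symm, hac.symm, hbc.symm]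

theorem IsCap.sdiff_subset_offSecants {P : Set V} (hP : IsCap F P) {S : Finset V} (hSP : ↑S ⊆ P) :
    P \ S ⊆ offSecants F S := fun _ ⟨hxP, hxS⟩ ↦
  ⟨hxS, fun _ hs _ hs' hss' ↦ hP (hSP hs) (hSP hs') hxP hss'
    (ne_of_mem_of_not_mem hs hxS) (ne_of_mem_of_not_mem hs' hxS)⟩

theorem IsCap.isIndepSet_sdiff {P : Set V} (hP : IsCap F P) {S : Finset V} (hSP : ↑S ⊆ P) :
    (pencilGraph F S).IsIndepSet (P \ S) := fun _ ⟨hvP, hvS⟩ _ ⟨hwP, hwS⟩ hvw ⟨_, _, hs, h⟩ ↦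
  hP (hSP hs) hvP hwP (ne_of_mem_of_not_mem hs hvS) (ne_of_mem_of_not_mem hs hwS) hvw h

open scoped Classical in
theorem exists_containers_of_fingerprint [Fintype V] {N t : ℕ} (hN : Nat.card (ℙ F V) ≤ N)
    {S : Finset V} (hS : #S ≤ 2 * N)
    (ht : Fintype.card V * (1 - #S / (2 * N) : ℝ) ^ t ≤ 2 * N) :
    ∃ 𝓕 : Finset (Finset V),
      (∀ P : Set V, IsCap F P → ↑S ⊆ P ∨ P ⊆ S → ∃ C ∈ 𝓕, P ⊆ C) ∧
      (∀ C ∈ 𝓕, #C ≤ 2 * N + t + #S) ∧ #𝓕 ≤ (Fintype.card V + 1) ^ t := by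
  have hβ : (#S / (2 * N) : ℝ) ≤ 1 := div_le_one_of_le₀ (by exact_mod_cast hS) (by positivity)
  have : (0 : ℝ) ≤ 1 - #S / (2 * N) := sub_nonneg.mpr hβ
  set U : Finset V := {x | x ∈ offSecants F S} with hU
  obtain ⟨𝓕, hcont, hcard⟩ := exists_isContainerFamily (G := pencilGraph F S) (U := U) hβ
    (fun A hA hmA ↦ exists_mul_card_le_card_adj (fun x hx ↦ (mem_filter.mp (hA hx)).2) hN
      (by exact_mod_cast hmA))
    (t := t) (ht.trans' (by gcongr; exact card_le_univ U))
  refine ⟨𝓕.image (S ∪ ·), fun P hP hSP ↦ ?_, fun C hC ↦ ?_, ?_⟩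
  · have hsdiff : P \ S ⊆ offSecants F S ∧ (pencilGraph F S).IsIndepSet (P \ S) := by
      obtain hSP | hPS := hSP
      · exact ⟨hP.sdiff_subset_offSecants hSP, hP.isIndepSet_sdiff hSP⟩
      · simp [Set.sdiff_eq_empty.mpr hPS]
    obtain ⟨C, hC, hPC⟩ := hcont.exists_subset (P \ S).toFinset
      (fun x hx ↦ by simpa [hU] using hsdiff.1 (Set.mem_toFinset.mp hx))
      (by simpa only [Set.coe_toFinset] using hsdiff.2)
    refine ⟨S ∪ C, mem_image_of_mem _ hC, ?_⟩
    rw [coe_union, ← Set.sdiff_subset_iff]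
    exact Set.toFinset_subset.mp hPC
  · obtain ⟨D, hD, rfl⟩ := mem_image.mp hC
    have hDcard : #D ≤ 2 * N + t := by exact_mod_cast hcont.card_le D hD
    linarith [card_union_le S D]
  · exact card_image_le.trans (hcard.trans (by gcongr; exact card_le_univ U))

theorem exists_cap_containers [Fintype V] {N k t : ℕ} (hN : Nat.card (ℙ F V) ≤ N)
    (hkV : k ≤ Fintype.card V) (hkN : k ≤ 2 * N)
    (ht : Fintype.card V * (1 - k / (2 * N) : ℝ) ^ t ≤ 2 * N) :
    ∃ 𝒞 : Finset (Finset V), (∀ P : Set V, IsCap F P → ∃ C ∈ 𝒞, P ⊆ C) ∧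
      (∀ C ∈ 𝒞, #C ≤ 2 * N + t + k) ∧
      #𝒞 ≤ Fintype.card V ^ k * (Fintype.card V + 1) ^ t := by
  classical
  have hfam (S : Finset V) (hS : #S = k) :=
    exists_containers_of_fingerprint (t := t) hN (hS.le.trans hkN) (by rwa [hS])
  choose! 𝓕 hcover hsize hcard using hfam
  refine ⟨(powersetCard k univ).biUnion 𝓕, fun P hP ↦ ?_, fun C hC ↦ ?_, ?_⟩
  · obtain ⟨S, hS, hSP⟩ : ∃ S : Finset V, #S = k ∧ (↑S ⊆ P ∨ P ⊆ S) := by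
      obtain hk | hk := le_total k #P.toFinset
      · obtain ⟨S, hSP, hS⟩ := exists_subset_card_eq hk
        exact ⟨S, hS, .inl (Set.subset_toFinset.mp hSP)⟩
      · obtain ⟨S, hPS, hS⟩ := exists_superset_card_eq hk hkV
        exact ⟨S, hS, .inr (Set.toFinset_subset.mp hPS)⟩
    obtain ⟨C, hC, hPC⟩ := hcover S hS P hP hSP
    exact ⟨C, mem_biUnion.mpr ⟨S, mem_powersetCard_univ.mpr hS, hC⟩, hPC⟩
  · obtain ⟨S, hS, hCS⟩ := mem_biUnion.mp hC
    have hSk := mem_powersetCard_univ.mp hS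
    exact hSk ▸ hsize S hSk C hCS
  · calc #((powersetCard k univ).biUnion 𝓕)
        ≤ #(powersetCard k (univ : Finset V)) * (Fintype.card V + 1) ^ t :=
          card_biUnion_le_card_mul _ _ _ fun S hS ↦ hcard S (mem_powersetCard_univ.mp hS)
      _ ≤ Fintype.card V ^ k * (Fintype.card V + 1) ^ t := by
          rw [card_powersetCard, card_univ]
          gcongr
          exact Nat.choose_le_pow _ _

end Caps

theorem card_projectivization_le {F V : Type*} [Field F] [Finite F] [AddCommGroup V] [Module F V]
    {d : ℕ} (hV : finrank F V = d + 1) : Nat.card (ℙ F V) ≤ 2 * Nat.card F ^ d := by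
  have hgeom : ∑ i ∈ range d, Nat.card F ^ i < Nat.card F ^ d :=
    Nat.geomSum_lt Finite.one_lt_card fun _ ↦ mem_range.mp
  rw [Projectivization.card_of_finrank F V hV, sum_range_succ]
  linarith

section Estimates

theorem one_sub_pow_le_inv {β x : ℝ} {t : ℕ} (hβ : β ≤ 1) (hx : 0 < x) (ht : Real.log x ≤ t * β) :
    (1 - β) ^ t ≤ x⁻¹ :=
  calc (1 - β) ^ t ≤ Real.exp (-β) ^ t := by
        gcongr
        exact Real.one_sub_le_exp_neg β
    _ = Real.exp (-(t * β)) := by rw [← Real.exp_nat_mul, mul_neg]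
    _ ≤ Real.exp (-Real.log x) := by gcongr
    _ = x⁻¹ := by rw [Real.exp_neg, Real.exp_log hx]

theorem log_le_sqrt_sub {x : ℝ} (hx : 0 < x) : Real.log x ≤ √x - 3 / 5 := by
  have hhalf : Real.log (√x / 2) ≤ √x / 2 - 1 := Real.log_le_sub_one_of_pos (by positivity)
  rw [Real.log_div (by positivity) two_ne_zero, Real.log_sqrt hx.le] at hhalf
  linarith [Real.log_two_lt_d9]

variable {M : ℕ}

theorem four_mul_add_le_nine_mul (hM : 2 ≤ M) {k t : ℕ} (hk : k ≤ √M + 1)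
    (ht : t ≤ 4 * √M * Real.log M + 1) : 4 * M + t + k ≤ 9 * M := by
  have hM' : (2 : ℝ) ≤ M := by exact_mod_cast hM
  have hlog : 4 * √M * Real.log M ≤ 4 * M - 12 / 5 * √M :=
    calc 4 * √M * Real.log M ≤ 4 * √M * (√M - 3 / 5) := by
          gcongr
          exact log_le_sqrt_sub (by linarith)
      _ = 4 * M - 12 / 5 * √M := by linear_combination 4 * Real.mul_self_sqrt M.cast_nonneg
  have hreal : (4 * M + t + k : ℝ) ≤ 9 * M := by linarith [Real.sqrt_nonneg M]
  exact_mod_cast hreal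

theorem mul_one_sub_pow_le {n k t : ℕ} (hM : 0 < M) (hn : n ≤ M ^ 2) (hk : √M ≤ k) (hkM : k ≤ M)
    (ht : 4 * √M * Real.log M ≤ t) : n * (1 - k / (4 * M) : ℝ) ^ t ≤ M := by
  have hM' : (0 : ℝ) < M := by exact_mod_cast hM
  have hk' : (k : ℝ) ≤ M := by exact_mod_cast hkM
  have hβ : (k / (4 * M) : ℝ) ≤ 1 := div_le_one_of_le₀ (by linarith) (by positivity)
  have hlog : Real.log M ≤ t * (k / (4 * M)) :=
    calc Real.log M = 4 * √M * Real.log M * (√M / (4 * M)) := by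
          field_simp
          rw [Real.sq_sqrt hM'.le]
      _ ≤ t * (k / (4 * M)) := by gcongr
  calc n * (1 - k / (4 * M) : ℝ) ^ t ≤ M ^ 2 * (M : ℝ)⁻¹ := by
        gcongr
        · exact_mod_cast hn
        · exact one_sub_pow_le_inv hβ hM' hlog
    _ = M := by field_simp

theorem pow_mul_pow_le_two_rpow (hM : 2 ≤ M) {n k t : ℕ} (hn : n ≤ M ^ 2) (hk : k ≤ √M + 1)
    (ht : t ≤ 4 * √M * Real.log M + 1) :
    (n ^ k * (n + 1) ^ t : ℝ) ≤ 2 ^ (16 * √M * Real.logb 2 M ^ 2) := by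
  have hM' : (2 : ℝ) ≤ M := by exact_mod_cast hM
  set L := Real.logb 2 M
  have hL : 1 ≤ L := by
    rwa [Real.le_logb_iff_rpow_le one_lt_two (by linarith), Real.rpow_one]
  have hsqrt : 1 ≤ √(M : ℝ) := Real.one_le_sqrt.mpr (by linarith)
  have hlog : Real.log M ≤ 7 / 10 * L := by
    calc Real.log M = Real.log 2 * L := (mul_div_cancel₀ _ (Real.log_pos one_lt_two).ne').symm
      _ ≤ 7 / 10 * L := by
          gcongr
          linarith [Real.log_two_lt_d9]
  have hexp : (2 * k + 3 * t : ℝ) ≤ 16 * √M * L := by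
    nlinarith
  have hsucc : n + 1 ≤ M ^ 3 := by nlinarith [pow_succ M 2]
  calc (n ^ k * (n + 1) ^ t : ℝ) ≤ (M ^ 2) ^ k * (M ^ 3) ^ t := by
        gcongr
        · exact_mod_cast hn
        · exact_mod_cast hsucc
    _ = (M : ℝ) ^ (2 * k + 3 * t : ℝ) := by
        norm_cast
        ring
    _ = 2 ^ (L * (2 * k + 3 * t)) := by
        rw [Real.rpow_mul zero_le_two, Real.rpow_logb two_pos (by norm_num) (by linarith)]
    _ ≤ 2 ^ (L * (16 * √M * L)) :=
        Real.rpow_le_rpow_of_exponent_le one_le_two (by gcongr)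
    _ = 2 ^ (16 * √M * L ^ 2) := by
        congr 1
        ring

end Estimates

theorem container_theorem_Fq2_general {F V : Type*} [Field F] [Finite F] [AddCommGroup V]
    [Module F V] {d M : ℕ} (hd : d ≠ 0) (hV : finrank F V = d + 1) (hM : Nat.card F ^ d = M) :
    ∃ 𝒞 : Finset (Finset V), (∀ P : Set V, IsCap F P → ∃ C ∈ 𝒞, P ⊆ C) ∧ (∀ C ∈ 𝒞, #C ≤ 9 * M) ∧
      (#𝒞 : ℝ) ≤ 2 ^ (16 * √M * Real.logb 2 M ^ 2) := by
  have : Module.Finite F V := Module.finite_of_finrank_eq_succ hV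
  have : Finite V := Module.finite_of_finite F
  have := Fintype.ofFinite V
  have hqM : Nat.card F ≤ M := hM ▸ Nat.le_self_pow hd _
  have hM₂ : 2 ≤ M := hqM.trans' Finite.one_lt_card
  have hcard : Fintype.card V = M * Nat.card F := by
    rw [← Nat.card_eq_fintype_card, natCard_eq_pow_finrank (K := F), hV, pow_succ, hM]
  have hMV : M ≤ Fintype.card V := hcard ▸ Nat.le_mul_of_pos_right M Nat.card_pos
  have hVM : Fintype.card V ≤ M ^ 2 := by
    rw [hcard, sq]
    gcongr
  set k := ⌈√M⌉₊
  set t := ⌈4 * √M * Real.log M⌉₊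
  have hk : k ≤ √M + 1 := (Nat.ceil_lt_add_one (by positivity)).le
  have ht : t ≤ 4 * √M * Real.log M + 1 := (Nat.ceil_lt_add_one (by positivity)).le
  have hkM : k ≤ M := Nat.ceil_le.mpr <| Real.sqrt_le_iff.mpr
    ⟨M.cast_nonneg, by exact_mod_cast Nat.le_self_pow two_ne_zero M⟩
  have hdecay : Fintype.card V * (1 - k / (2 * (2 * M : ℕ)) : ℝ) ^ t ≤ 2 * (2 * M : ℕ) := by
    have h4M : (2 * (2 * M : ℕ) : ℝ) = 4 * M := by
      push_cast
      ring
    rw [h4M]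
    linarith [mul_one_sub_pow_le (by lia) hVM (Nat.le_ceil _) hkM (Nat.le_ceil _)]
  obtain ⟨𝒞, hcover, hsize, hcount⟩ := exists_cap_containers (F := F) (t := t)
    (hM ▸ card_projectivization_le hV) (hkM.trans hMV) (by lia) hdecay
  exact ⟨𝒞, hcover, fun C hC ↦ by linarith [hsize C hC, four_mul_add_le_nine_mul hM₂ hk ht],
    (pow_mul_pow_le_two_rpow hM₂ hVM hk ht).trans' (by exact_mod_cast hcount)⟩

/-- The container theorem for general position sets in `𝔽_q²`. -/
theorem container_theorem_Fq2 :
    ∃ c : ℝ, 0 < c ∧ ∃ Q : ℕ, ∀ q : ℕ, Q ≤ q → IsPrimePow q →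
      ∀ (F : Type) [Field F] [Fintype F], Fintype.card F = q →
        ∃ 𝒞 : Finset (Finset (Fin 2 → F)),
          (∀ P : Set (Fin 2 → F), IsGenPos F 2 P → ∃ C ∈ 𝒞, P ⊆ ↑C) ∧
          (∀ C ∈ 𝒞, C.card ≤ 9 * q) ∧
          ((𝒞.card : ℝ) ≤ (2 : ℝ) ^ (c * Real.sqrt q * (Real.logb 2 q) ^ 2)) := by
  refine ⟨16, by norm_num, 0, fun q _ _ F _ _ hF ↦ ?_⟩
  obtain ⟨𝒞, hcover, h⟩ := container_theorem_Fq2_general (F := F) (V := Fin 2 → F) one_ne_zero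
    (finrank_fin_fun F) (by rw [pow_one, Nat.card_eq_fintype_card, hF])
  exact ⟨𝒞, fun P hP ↦ hcover P hP.isCap, h⟩
end

section
/- There exists an absolute constant c > 0 such that for every δ > 0 there exists Q with the following property for every prime power q ≥ Q. Let S_p be a p-random subset of 𝔽_q² (each point included independently with probability p). (a) If 0 ≤ p ≤ q^{−1/2}(log q)², then the probability that S_p contains a general position set of size at least c·q^{1/2}(log q)² is at most δ. (b) If q^{−1/2}(log q)² ≤ p ≤ 1, then the probability that S_p contains a general position set of size at least c·p·q is at most δ. -/
open scoped Classical

/-- The probability, under the product Bernoulli distribution in which each point of the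
finite ground set `V` is included independently with probability `p`, that the random
subset satisfies the event `E`. -/
noncomputable def bernoulliProb (V : Type*) [Fintype V] (p : ℝ)
    (E : Finset V → Prop) : ℝ :=
  ∑ S : Finset V,
    if E S then p ^ S.card * (1 - p) ^ (Fintype.card V - S.card) else 0

/-!
The proof is the container method combined with a first moment bound. Fix a general position set
`A` of size `s ≈ √q log q` and join two points by an edge whenever their line passes through a
further point of `A`. Every general position set containing `A` is independent in this graph. A
point `a` lies on only `q + 1` lines, so by Cauchy–Schwarz a set `B` of more than `8q` points has at
least `|B|² / 4q` ordered pairs collinear with `a`; a pair is collinear with at most two points of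
`A`, so some vertex of `B` has at least `s |B| / 8q` neighbours in `B`. The Kleitman–Winston
algorithm then places the independent sets in few containers of size at most `8q`, and summing over
`A` yields `2 ^ O(√q log² q)` containers for all large general position sets. A container has at
most `(8q choose m)` subsets of size `m`, each contained in `S_p` with probability `p ^ m`.
-/

section

open Finset

/-! ### Bernoulli random subsets -/

section Bernoulli

variable {V : Type*} [Fintype V] {p : ℝ}

theorem bernoulliProb_eq_sum_filter (E : Finset V → Prop) :
    bernoulliProb V p E = ∑ S with E S, p ^ #S * (1 - p) ^ (Fintype.card V - #S) :=
  (sum_filter E _).symm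

theorem bernoulliProb_superset (Y : Finset V) :
    bernoulliProb V p (fun S => Y ⊆ S) = p ^ #Y := by
  have hinj : Set.InjOn (Y ∪ ·) ((univ \ Y).powerset : Set (Finset V)) := by
    intro S hS T hT h
    simp only [coe_powerset, Set.mem_preimage, Set.mem_powerset_iff, coe_subset] at hS hT
    rw [← union_sdiff_cancel_left (disjoint_sdiff.mono_right hS),
      ← union_sdiff_cancel_left (disjoint_sdiff.mono_right hT)]
    exact congrArg (· \ Y) h
  calc bernoulliProb V p (fun S => Y ⊆ S)
      = ∑ S ∈ Icc Y univ, p ^ #S * (1 - p) ^ (Fintype.card V - #S) := by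
        rw [bernoulliProb_eq_sum_filter]
        exact sum_congr (by ext; simp) fun _ _ => rfl
    _ = ∑ S ∈ (univ \ Y).powerset, p ^ #Y * (p ^ #S * (1 - p) ^ (#(univ \ Y) - #S)) := by
        rw [Icc_eq_image_powerset (subset_univ Y), sum_image hinj]
        refine sum_congr rfl fun S hS => ?_
        rw [card_union_of_disjoint (disjoint_sdiff.mono_right (mem_powerset.1 hS)),
          card_univ_sdiff, pow_add, Nat.sub_add_eq, mul_assoc]
    _ = p ^ #Y := by
        rw [← mul_sum, sum_pow_mul_eq_add_pow, add_sub_cancel, one_pow, mul_one]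

theorem bernoulliProb_le_sum {ι : Type*} (hp0 : 0 ≤ p) (hp1 : p ≤ 1) {E : Finset V → Prop}
    (s : Finset ι) (E' : ι → Finset V → Prop) (hE : ∀ S, E S → ∃ i ∈ s, E' i S) :
    bernoulliProb V p E ≤ ∑ i ∈ s, bernoulliProb V p (E' i) := by
  simp only [bernoulliProb]
  rw [sum_comm]
  refine sum_le_sum fun S _ => ?_
  have hweight : 0 ≤ p ^ #S * (1 - p) ^ (Fintype.card V - #S) :=
    mul_nonneg (pow_nonneg hp0 _) (pow_nonneg (sub_nonneg.2 hp1) _)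
  have hterm : ∀ i ∈ s,
      0 ≤ if E' i S then p ^ #S * (1 - p) ^ (Fintype.card V - #S) else 0 := by
    intro i _
    split_ifs
    exacts [hweight, le_rfl]
  split_ifs with hS
  · obtain ⟨i, hi, hiS⟩ := hE S hS
    simpa only [hiS, if_true] using single_le_sum hterm hi
  · exact sum_nonneg hterm

end Bernoulli

/-! ### Container families -/

/-- `𝒞` is a family of containers of size at most `N` for the sets satisfying `P`, so that a union
bound over those sets can be replaced by one over `𝒞`. -/
structure IsContainerFamily_s6 {V : Type*} (P : Finset V → Prop) (N : ℕ) (𝒞 : Finset (Finset V)) :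
    Prop where
  card_le : ∀ C ∈ 𝒞, #C ≤ N
  exists_superset : ∀ T, P T → ∃ C ∈ 𝒞, T ⊆ C

namespace IsContainerFamily_s6

variable {V : Type*} {P Q : Finset V → Prop} {N : ℕ}

theorem mono {𝒞 : Finset (Finset V)} (h : IsContainerFamily_s6 P N 𝒞) (hQP : ∀ T, Q T → P T) :
    IsContainerFamily_s6 Q N 𝒞 :=
  ⟨h.card_le, fun T hT => h.exists_superset T (hQP T hT)⟩

theorem singleton {B : Finset V} (hB : #B ≤ N) : IsContainerFamily_s6 (· ⊆ B) N {B} :=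
  ⟨by simpa using hB, fun _ hT => ⟨B, mem_singleton_self B, hT⟩⟩

theorem biUnion [DecidableEq V] {ι : Type*} {s : Finset ι} {P : ι → Finset V → Prop}
    {𝒞 : ι → Finset (Finset V)} (h : ∀ i ∈ s, IsContainerFamily_s6 (P i) N (𝒞 i)) :
    IsContainerFamily_s6 (fun T => ∃ i ∈ s, P i T) N (s.biUnion 𝒞) where
  card_le C hC := by
    obtain ⟨i, hi, hCi⟩ := mem_biUnion.1 hC
    exact (h i hi).card_le C hCi
  exists_superset := by
    rintro T ⟨i, hi, hT⟩
    obtain ⟨C, hC, hTC⟩ := (h i hi).exists_superset T hT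
    exact ⟨C, mem_biUnion.2 ⟨i, hi, hC⟩, hTC⟩

theorem union [DecidableEq V] {𝒞 𝒟 : Finset (Finset V)} (h𝒞 : IsContainerFamily_s6 P N 𝒞)
    (h𝒟 : IsContainerFamily_s6 Q N 𝒟) : IsContainerFamily_s6 (fun T => P T ∨ Q T) N (𝒞 ∪ 𝒟) where
  card_le C hC := (mem_union.1 hC).elim (h𝒞.card_le C) (h𝒟.card_le C)
  exists_superset := by
    rintro T (hT | hT)
    · obtain ⟨C, hC, hTC⟩ := h𝒞.exists_superset T hT
      exact ⟨C, mem_union_left 𝒟 hC, hTC⟩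
    · obtain ⟨C, hC, hTC⟩ := h𝒟.exists_superset T hT
      exact ⟨C, mem_union_right 𝒞 hC, hTC⟩

theorem bernoulliProb_le [Fintype V] {𝒞 : Finset (Finset V)} (h : IsContainerFamily_s6 P N 𝒞)
    {p : ℝ} (hp0 : 0 ≤ p) (hp1 : p ≤ 1) (m : ℕ) :
    bernoulliProb V p (fun S => ∃ T ⊆ S, P T ∧ m ≤ #T) ≤ #𝒞 * (N.choose m * p ^ m) := by
  set 𝒴 := 𝒞.biUnion (powersetCard m)
  have hcover : ∀ S : Finset V, (∃ T ⊆ S, P T ∧ m ≤ #T) → ∃ Y ∈ 𝒴, Y ⊆ S := by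
    rintro S ⟨T, hTS, hT, hmT⟩
    obtain ⟨C, hC, hTC⟩ := h.exists_superset T hT
    obtain ⟨Y, hYT, hY⟩ := exists_subset_card_eq hmT
    exact ⟨Y, mem_biUnion.2 ⟨C, hC, mem_powersetCard.2 ⟨hYT.trans hTC, hY⟩⟩, hYT.trans hTS⟩
  have hcard : ∀ Y ∈ 𝒴, #Y = m := by
    intro Y hY
    obtain ⟨C, _, hYC⟩ := mem_biUnion.1 hY
    exact (mem_powersetCard.1 hYC).2
  have h𝒴 : #𝒴 ≤ #𝒞 * N.choose m := by
    refine card_biUnion_le_card_mul _ _ _ fun C hC => ?_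
    rw [card_powersetCard]
    exact Nat.choose_le_choose m (h.card_le C hC)
  calc bernoulliProb V p (fun S => ∃ T ⊆ S, P T ∧ m ≤ #T)
      ≤ ∑ Y ∈ 𝒴, bernoulliProb V p (fun S => Y ⊆ S) := bernoulliProb_le_sum hp0 hp1 𝒴 _ hcover
    _ = #𝒴 * p ^ m := by
        rw [sum_congr rfl fun Y hY => by rw [bernoulliProb_superset, hcard Y hY], sum_const,
          nsmul_eq_mul]
    _ ≤ (#𝒞 * N.choose m : ℕ) * p ^ m := by gcongr
    _ = #𝒞 * (N.choose m * p ^ m) := by rw [Nat.cast_mul, mul_assoc]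

end IsContainerFamily_s6

section KleitmanWinston

variable {V : Type*} (G : SimpleGraph V) [DecidableRel G.Adj]

theorem card_filter_not_adj_le_of_card_le_mul_exp {B : Finset V} {v : V} {β x : ℝ}
    (hv : β * #B ≤ #{w ∈ B | G.Adj v w}) (hB : #B ≤ x * Real.exp β) :
    (#{w ∈ B | ¬G.Adj v w} : ℝ) ≤ x := by
  have hsplit : (#{w ∈ B | G.Adj v w} : ℝ) + #{w ∈ B | ¬G.Adj v w} = #B :=
    mod_cast card_filter_add_card_filter_not (G.Adj v)
  calc (#{w ∈ B | ¬G.Adj v w} : ℝ) ≤ #B * (1 - β) := by linarith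
    _ ≤ #B * Real.exp (-β) := by
      gcongr
      exact Real.one_sub_le_exp_neg β
    _ ≤ x * Real.exp β * Real.exp (-β) := by gcongr
    _ = x := by rw [mul_assoc, ← Real.exp_add, add_neg_cancel, Real.exp_zero, mul_one]

theorem IsContainerFamily_s6.union_of_filter_not_adj_of_erase [DecidableEq V] {N : ℕ} {B : Finset V}
    {𝒞 𝒟 : Finset (Finset V)} (v : V)
    (h𝒞 : IsContainerFamily_s6 (fun I => I ⊆ {w ∈ B | ¬G.Adj v w} ∧ G.IsIndepSet I) N 𝒞)
    (h𝒟 : IsContainerFamily_s6 (fun I => I ⊆ B.erase v ∧ G.IsIndepSet I) N 𝒟) :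
    IsContainerFamily_s6 (fun I => I ⊆ B ∧ G.IsIndepSet I) N (𝒞 ∪ 𝒟) := by
  refine (h𝒞.union h𝒟).mono ?_
  rintro I ⟨hIB, hI⟩
  by_cases hvI : v ∈ I
  · refine .inl ⟨fun w hw => mem_filter.2 ⟨hIB hw, fun hvw => ?_⟩, hI⟩
    exact hI hvI hw hvw.ne hvw
  · exact .inr ⟨subset_erase.2 ⟨hIB, hvI⟩, hI⟩

-- Restricting to the non-neighbours of `v` shrinks `B` by a factor `exp (-β)`, so this happens at
-- most `j` times; between two such restrictions at most `#B` vertices are discarded.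
theorem exists_isContainerFamily_isIndepSet {N : ℕ} {β : ℝ}
    (hG : ∀ B : Finset V, N < #B → ∃ v ∈ B, β * #B ≤ #{w ∈ B | G.Adj v w}) (j : ℕ)
    (B : Finset V) (hB : #B ≤ N * Real.exp (β * j)) :
    ∃ 𝒞, IsContainerFamily_s6 (fun I => I ⊆ B ∧ G.IsIndepSet I) N 𝒞 ∧ #𝒞 ≤ (#B + 1) ^ j := by
  induction j generalizing B with
  | zero =>
    have hBN : #B ≤ N := by simpa using hB
    exact ⟨{B}, (IsContainerFamily_s6.singleton hBN).mono fun _ hI => hI.1, by simp⟩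
  | succ j ihj =>
    induction B using Finset.strongInduction with
    | H B ihB =>
      rcases le_or_gt #B N with hBN | hBN
      · exact ⟨{B}, (IsContainerFamily_s6.singleton hBN).mono fun _ hI => hI.1,
          by simpa using Nat.one_le_pow _ _ (#B).succ_pos⟩
      obtain ⟨v, hv, hdeg⟩ := hG B hBN
      have hfactor : N * Real.exp (β * (j + 1 : ℕ)) = N * Real.exp (β * j) * Real.exp β := by
        rw [mul_assoc, ← Real.exp_add, Nat.cast_succ, mul_add_one]
      obtain ⟨𝒞, h𝒞, hcard𝒞⟩ :=
        ihj _ (card_filter_not_adj_le_of_card_le_mul_exp G hdeg (hB.trans_eq hfactor))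
      obtain ⟨𝒟, h𝒟, hcard𝒟⟩ := ihB _ (erase_ssubset hv) (le_trans (mod_cast card_erase_le) hB)
      refine ⟨𝒞 ∪ 𝒟, h𝒞.union_of_filter_not_adj_of_erase G v h𝒟, ?_⟩
      rw [card_erase_add_one hv] at hcard𝒟
      calc #(𝒞 ∪ 𝒟) ≤ #𝒞 + #𝒟 := card_union_le _ _
        _ ≤ (#B + 1) ^ j + #B ^ (j + 1) := by
          gcongr
          exact hcard𝒞.trans (Nat.pow_le_pow_left (Nat.succ_le_succ (card_filter_le _ _)) j)
        _ ≤ (#B + 1) ^ j + (#B + 1) ^ j * #B := by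
          rw [pow_succ]
          gcongr
          exact Nat.le_succ _
        _ = (#B + 1) ^ (j + 1) := by ring

end KleitmanWinston

/-! ### Pairs collinear with a given point -/

theorem sq_card_le_card_image_mul_card_filter_eq {α β : Type*} [DecidableEq β] (D : Finset α)
    (f : α → β) : #D ^ 2 ≤ #(D.image f) * #{z ∈ D ×ˢ D | f z.1 = f z.2} := by
  have hpairs : #{z ∈ D ×ˢ D | f z.1 = f z.2} = ∑ b ∈ D.image f, #{x ∈ D | f x = b} ^ 2 := by
    rw [card_eq_sum_card_fiberwise (f := fun z => f z.1) (t := D.image f)]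
    · refine sum_congr rfl fun b _ => ?_
      rw [sq, ← card_product]
      congr 1
      grind
    · intro z hz
      exact mem_image_of_mem f (mem_product.1 (mem_filter.1 hz).1).1
  rw [hpairs, card_eq_sum_card_image f D]
  exact sq_sum_le_card_mul_sum_sq

section CollinearPairs

variable {F V : Type*} [AddCommGroup V]

theorem collinear_of_span_singleton_sub_eq [DivisionRing F] [Module F V] {a x y : V}
    (h : Submodule.span F {x - a} = Submodule.span F {y - a}) : Collinear F {a, x, y} := by
  obtain ⟨r, hr⟩ : ∃ r : F, r • (x - a) = y - a :=
    Submodule.mem_span_singleton.1 (h ▸ Submodule.mem_span_singleton_self (y - a))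
  rw [collinear_iff_of_mem (Set.mem_insert a _)]
  refine ⟨x - a, ?_⟩
  rintro z (rfl | rfl | rfl)
  exacts [⟨0, by simp⟩, ⟨1, by simp⟩, ⟨r, by simp [hr]⟩]

open scoped LinearAlgebra.Projectivization in
theorem card_image_span_singleton_sub_le [DivisionRing F] [Module F V] [Finite V] {a : V}
    {D : Finset V} (ha : a ∉ D) :
    #(D.image fun x => Submodule.span F {x - a}) ≤ Nat.card (ℙ F V) := by
  have := Fintype.ofFinite (ℙ F V)
  have hsub : D.image (fun x => Submodule.span F {x - a}) ⊆
      (univ : Finset (ℙ F V)).image Projectivization.submodule := by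
    refine image_subset_iff.2 fun x hx => mem_image.2 ?_
    have hxa : x - a ≠ 0 := sub_ne_zero.2 (ne_of_mem_of_not_mem hx ha)
    exact ⟨.mk F (x - a) hxa, mem_univ _, Projectivization.submodule_mk _ hxa⟩
  rw [Nat.card_eq_fintype_card]
  exact (card_le_card hsub).trans card_image_le

variable (F) in
/-- The ordered pairs of distinct points of `B` that are collinear with, and different from, the
point `a`; counting them bounds the number of edges of the secant graph from below. -/
noncomputable def collinearPairs [DivisionRing F] [Module F V] [DecidableEq V] (a : V)
    (B : Finset V) : Finset (V × V) :=
  {z ∈ B.offDiag | a ≠ z.1 ∧ a ≠ z.2 ∧ Collinear F {a, z.1, z.2}}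

open scoped LinearAlgebra.Projectivization in
theorem sq_card_erase_le_card_projectivization_mul [DivisionRing F] [Module F V] [Finite V]
    [DecidableEq V] (a : V) (B : Finset V) :
    #(B.erase a) ^ 2 ≤ Nat.card (ℙ F V) * (#(collinearPairs F a B) + #(B.erase a)) := by
  let dir : V → Submodule F V := fun x => Submodule.span F {x - a}
  have hpairs : ({z ∈ B.erase a ×ˢ B.erase a | dir z.1 = dir z.2} : Finset (V × V)) ⊆
      collinearPairs F a B ∪ (B.erase a).diag := by
    rintro ⟨x, y⟩ hz
    simp only [mem_filter, mem_product, mem_erase] at hz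
    obtain ⟨⟨⟨hxa, hx⟩, hya, hy⟩, hdir⟩ := hz
    by_cases hxy : x = y
    · exact mem_union_right _ (mem_diag.2 ⟨mem_erase.2 ⟨hxa, hx⟩, hxy⟩)
    · exact mem_union_left _ (mem_filter.2 ⟨mem_offDiag.2 ⟨hx, hy, hxy⟩, hxa.symm, hya.symm,
        collinear_of_span_singleton_sub_eq hdir⟩)
  refine (sq_card_le_card_image_mul_card_filter_eq (B.erase a) dir).trans ?_
  gcongr
  · exact card_image_span_singleton_sub_le (notMem_erase a B)
  · exact ((card_le_card hpairs).trans (card_union_le _ _)).trans_eq (by rw [diag_card])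

theorem sq_card_le_four_mul_card_collinearPairs [Field F] [Fintype F] [Module F V]
    [DecidableEq V] (hV : Module.finrank F V = 2) (a : V) {B : Finset V}
    (hB : 8 * Fintype.card F < #B) :
    #B ^ 2 ≤ 4 * Fintype.card F * #(collinearPairs F a B) := by
  have : Module.Finite F V := Module.finite_of_finrank_pos (by omega)
  have : Finite V := Module.finite_of_finite F
  have hq : 2 ≤ Fintype.card F := Fintype.one_lt_card
  have hpairs := sq_card_erase_le_card_projectivization_mul (F := F) a B
  rw [Projectivization.card_of_finrank_two F V hV, Nat.card_eq_fintype_card] at hpairs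
  have hBD : #B - 1 ≤ #(B.erase a) := pred_card_le_card_erase
  have hB' : #B ≤ #(B.erase a) + 1 := by omega
  have hD : 8 * Fintype.card F ≤ #(B.erase a) := by omega
  clear hBD
  generalize #(B.erase a) = n, #B = b, Fintype.card F = q, #(collinearPairs F a B) = M at *
  zify at *
  have hb : (b : ℤ) ^ 2 ≤ (n + 1) ^ 2 := by gcongr
  have hn : 4 * ((n : ℤ) + 1) ^ 2 ≤ 5 * n ^ 2 := by nlinarith
  have hqn : 8 * ((q : ℤ) * n) ≤ n ^ 2 := by nlinarith
  have hqM : 2 * ((q : ℤ) + 1) * (M + n) ≤ 3 * q * (M + n) :=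
    mul_le_mul_of_nonneg_right (by linarith) (by positivity)
  nlinarith

end CollinearPairs

/-! ### Sets in general position -/

theorem IsGenPos.mono {F : Type*} [Field F] {d : ℕ} {P Q : Set (Fin d → F)} (hQ : IsGenPos F d Q)
    (hPQ : P ⊆ Q) : IsGenPos F d P :=
  fun s hs => hQ s (hs.trans hPQ)

section SecantGraph

variable {F : Type*} [Field F]

theorem IsGenPos.not_collinear {P : Set (Fin 2 → F)} (hP : IsGenPos F 2 P) {a b c : Fin 2 → F}
    (ha : a ∈ P) (hb : b ∈ P) (hc : c ∈ P) (hab : a ≠ b) (hac : a ≠ c) (hbc : b ≠ c) :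
    ¬Collinear F {a, b, c} := by
  have hcard : #{a, b, c} = 3 := card_eq_three.2 ⟨a, b, c, hab, hac, hbc, rfl⟩
  have hsub : (({a, b, c} : Finset (Fin 2 → F)) : Set (Fin 2 → F)) ⊆ P := by
    simp [Set.insert_subset_iff, ha, hb, hc]
  have hrank := (hP _ hsub hcard).finrank_vectorSpan ((Fintype.card_coe _).trans hcard)
  have hrange : ({a, b, c} : Set (Fin 2 → F)) =
      Set.range ((↑) : ({a, b, c} : Finset (Fin 2 → F)) → Fin 2 → F) := by ext; simp
  rw [hrange, collinear_iff_finrank_le_one, hrank]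
  norm_num

theorem IsGenPos.card_filter_collinear_le_two {A : Finset (Fin 2 → F)} (hA : IsGenPos F 2 A)
    {x y : Fin 2 → F} (hxy : x ≠ y) : #{a ∈ A | Collinear F {a, x, y}} ≤ 2 := by
  have hline : ∀ {a}, Collinear F {a, x, y} → a ∈ line[F, x, y] := fun h =>
    h.mem_affineSpan_of_mem_of_ne (by simp) (by simp) (by simp) hxy
  by_contra! hcard
  obtain ⟨a, b, c, ha, hb, hc, hab, hac, hbc⟩ := two_lt_card_iff.1 hcard
  rw [mem_filter] at ha hb hc
  exact hA.not_collinear ha.1 hb.1 hc.1 hab hac hbc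
    (collinear_triple_of_mem_affineSpan_pair (hline ha.2) (hline hb.2) (hline hc.2))

/-- The secant graph of `A`, in which two points are adjacent if their line passes through a further
point of `A`; the container algorithm is run on this graph. -/
def secantGraph (A : Finset (Fin 2 → F)) : SimpleGraph (Fin 2 → F) where
  Adj x y := x ≠ y ∧ ∃ a ∈ A, a ≠ x ∧ a ≠ y ∧ Collinear F {a, x, y}
  symm := ⟨fun x y ⟨hxy, a, ha, hax, hay, hcol⟩ =>
    ⟨hxy.symm, a, ha, hay, hax, Set.pair_comm x y ▸ hcol⟩⟩
  loopless := ⟨fun _ h => h.1 rfl⟩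

theorem IsGenPos.isIndepSet_secantGraph {A T : Finset (Fin 2 → F)} (hT : IsGenPos F 2 T)
    (hAT : A ⊆ T) : (secantGraph A).IsIndepSet T := by
  rintro x hx y hy hxy ⟨_, a, ha, hax, hay, hcol⟩
  exact hT.not_collinear (hAT ha) hx hy hax hay hxy hcol

theorem IsGenPos.sum_card_collinearPairs_le {A : Finset (Fin 2 → F)} (hA : IsGenPos F 2 A)
    (B : Finset (Fin 2 → F)) :
    ∑ a ∈ A, #(collinearPairs F a B) ≤ 2 * ∑ x ∈ B, #{y ∈ B | (secantGraph A).Adj x y} := by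
  let r : (Fin 2 → F) → (Fin 2 → F) × (Fin 2 → F) → Prop :=
    fun a z => a ≠ z.1 ∧ a ≠ z.2 ∧ Collinear F {a, z.1, z.2}
  have hmult : ∀ z ∈ B.offDiag,
      #{a ∈ A | r a z} ≤ if (secantGraph A).Adj z.1 z.2 then 2 else 0 := by
    intro z hz
    have hne : z.1 ≠ z.2 := (mem_offDiag.1 hz).2.2
    split_ifs with hadj
    · exact (card_le_card (monotone_filter_right A fun _ _ h => h.2.2)).trans
        (hA.card_filter_collinear_le_two hne)
    · exact (card_eq_zero.2 (filter_eq_empty_iff.2 fun a ha h => hadj ⟨hne, a, ha, h⟩)).le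
  calc ∑ a ∈ A, #(collinearPairs F a B)
      = ∑ z ∈ B.offDiag, #{a ∈ A | r a z} :=
        sum_card_bipartiteAbove_eq_sum_card_bipartiteBelow r
    _ ≤ ∑ z ∈ B.offDiag, if (secantGraph A).Adj z.1 z.2 then 2 else 0 := sum_le_sum hmult
    _ ≤ ∑ z ∈ B ×ˢ B, if (secantGraph A).Adj z.1 z.2 then 2 else 0 :=
        sum_le_sum_of_subset (B.diag_union_offDiag ▸ subset_union_right)
    _ = 2 * ∑ x ∈ B, #{y ∈ B | (secantGraph A).Adj x y} := by
        simp only [sum_product, card_filter, mul_sum, mul_ite, mul_one, mul_zero]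

variable [Fintype F] {q : ℕ}

theorem IsGenPos.exists_le_degree_secantGraph (hF : Fintype.card F = q) {A : Finset (Fin 2 → F)}
    (hA : IsGenPos F 2 A) {B : Finset (Fin 2 → F)} (hB : 8 * q < #B) :
    ∃ v ∈ B, (#A / (8 * q) : ℝ) * #B ≤ #{w ∈ B | (secantGraph A).Adj v w} := by
  subst hF
  have hB0 : 0 < #B := by omega
  have hpairs : #A * #B ^ 2 ≤ 4 * Fintype.card F * ∑ a ∈ A, #(collinearPairs F a B) := by
    rw [mul_sum, ← smul_eq_mul]
    exact card_nsmul_le_sum _ _ _ fun a _ => sq_card_le_four_mul_card_collinearPairs (by simp) a hB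
  have hsum : ∑ _v ∈ B, #A * #B ≤
      ∑ v ∈ B, 8 * Fintype.card F * #{w ∈ B | (secantGraph A).Adj v w} := by
    rw [sum_const, smul_eq_mul, ← mul_sum]
    have := Nat.mul_le_mul_left (4 * Fintype.card F) (hA.sum_card_collinearPairs_le B)
    linarith
  obtain ⟨v, hv, hdeg⟩ := exists_le_of_sum_le (card_pos.1 hB0) hsum
  refine ⟨v, hv, ?_⟩
  rw [div_mul_eq_mul_div, div_le_iff₀' (by positivity)]
  exact_mod_cast hdeg

theorem exists_isContainerFamily_isGenPos_of_subset (hF : Fintype.card F = q)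
    (A : Finset (Fin 2 → F)) {t : ℕ} (ht : (q : ℝ) ≤ 8 * Real.exp (#A / (8 * q) * t)) :
    ∃ 𝒞, IsContainerFamily_s6 (fun T => IsGenPos F 2 T ∧ A ⊆ T) (8 * q) 𝒞 ∧
      #𝒞 ≤ (q ^ 2 + 1) ^ t := by
  by_cases hA : IsGenPos F 2 A
  · have huniv : #(univ : Finset (Fin 2 → F)) = q ^ 2 := by simp [hF]
    have hsize : (#(univ : Finset (Fin 2 → F)) : ℝ) ≤
        (8 * q : ℕ) * Real.exp (#A / (8 * q) * t) := by
      rw [huniv]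
      push_cast
      nlinarith
    obtain ⟨𝒞, h𝒞, hcard⟩ := exists_isContainerFamily_isIndepSet (secantGraph A)
      (fun B hB => hA.exists_le_degree_secantGraph hF hB) t univ hsize
    exact ⟨𝒞, h𝒞.mono fun T hT => ⟨subset_univ T, hT.1.isIndepSet_secantGraph hT.2⟩,
      huniv ▸ hcard⟩
  · exact ⟨∅, ⟨by simp, fun T hT => absurd (hT.1.mono (coe_subset.2 hT.2)) hA⟩, by simp⟩

theorem exists_isContainerFamily_isGenPos_of_card (hF : Fintype.card F = q) {s t : ℕ}
    (hst : (q : ℝ) ≤ 8 * Real.exp (s / (8 * q) * t)) :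
    ∃ 𝒞, IsContainerFamily_s6 (fun T : Finset (Fin 2 → F) => IsGenPos F 2 T ∧ s ≤ #T) (8 * q) 𝒞 ∧
      #𝒞 ≤ (q ^ 2) ^ s * (q ^ 2 + 1) ^ t := by
  have hexists : ∀ A ∈ powersetCard s (univ : Finset (Fin 2 → F)), ∃ 𝒞,
      IsContainerFamily_s6 (fun T => IsGenPos F 2 T ∧ A ⊆ T) (8 * q) 𝒞 ∧ #𝒞 ≤ (q ^ 2 + 1) ^ t :=
    fun A hA => exists_isContainerFamily_isGenPos_of_subset hF A (by
      rwa [(mem_powersetCard.1 hA).2])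
  choose! 𝒞 h𝒞 hcard using hexists
  refine ⟨_, (IsContainerFamily_s6.biUnion h𝒞).mono ?_, ?_⟩
  · rintro T ⟨hT, hsT⟩
    obtain ⟨A, hAT, hA⟩ := exists_subset_card_eq hsT
    exact ⟨A, mem_powersetCard.2 ⟨subset_univ A, hA⟩, hT, hAT⟩
  · refine (card_biUnion_le_card_mul _ _ _ hcard).trans ?_
    gcongr
    rw [card_powersetCard, card_univ, Fintype.card_fun, Fintype.card_fin, hF]
    exact Nat.choose_le_pow _ _

end SecantGraph

/-! ### Estimates -/

theorem choose_mul_pow_le_pow {N m : ℕ} {p t : ℝ} (hp : 0 ≤ p)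
    (h : Real.exp 1 * (N * p) ≤ t * m) : N.choose m * p ^ m ≤ t ^ m := by
  have hbase : N * p ≤ t * m * Real.exp (-1) := by
    rwa [Real.exp_neg, ← div_eq_mul_inv, le_div_iff₀' (Real.exp_pos 1)]
  have ht : 0 ≤ t ^ m := by
    rcases m.eq_zero_or_pos with rfl | hm
    · simp
    · have : 0 ≤ t * m := le_trans (by positivity) h
      exact pow_nonneg (nonneg_of_mul_nonneg_left this (by positivity)) m
  calc N.choose m * p ^ m ≤ N ^ m / m.factorial * p ^ m := by
        gcongr
        exact Nat.choose_le_pow_div m N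
    _ = (N * p) ^ m / m.factorial := by rw [mul_pow]; ring
    _ ≤ (t * m * Real.exp (-1)) ^ m / m.factorial := by gcongr
    _ = t ^ m * Real.exp (-m) * (m ^ m / m.factorial) := by
        rw [mul_pow, mul_pow, ← Real.exp_nat_mul, mul_neg_one]; ring
    _ ≤ t ^ m * Real.exp (-m) * Real.exp m := by
        gcongr
        exact Real.pow_div_factorial_le_exp _ m.cast_nonneg m
    _ = t ^ m := by rw [mul_assoc, ← Real.exp_add, neg_add_cancel, Real.exp_zero, mul_one]

theorem log_le_logb_two {x : ℝ} (hx : 1 ≤ x) : Real.log x ≤ Real.logb 2 x :=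
  le_div_self (Real.log_nonneg hx) (Real.log_pos one_lt_two) (by linarith [Real.log_two_lt_d9])

theorem eight_le_logb_two {x : ℝ} (hx : 256 ≤ x) : 8 ≤ Real.logb 2 x := by
  rw [Real.le_logb_iff_rpow_le one_lt_two (by linarith)]
  norm_num
  exact hx

theorem le_eight_mul_exp_of_sqrt_mul_logb_le {x s : ℝ} (hx : 256 ≤ x)
    (hs : √x * Real.logb 2 x ≤ s) : x ≤ 8 * Real.exp (s / (8 * x) * s) := by
  have hL := eight_le_logb_two hx
  have hlog_le_logb := log_le_logb_two (x := x) (by linarith)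
  have hs_nonneg : 0 ≤ s := le_trans (by positivity) hs
  have hlog : Real.log x ≤ s / (8 * x) * s := by
    rw [div_mul_eq_mul_div, le_div_iff₀' (by positivity)]
    calc 8 * x * Real.log x ≤ Real.logb 2 x * x * Real.logb 2 x := by
          gcongr
          exact Real.log_nonneg (by linarith)
      _ = (√x * Real.logb 2 x) ^ 2 := by rw [mul_pow, Real.sq_sqrt (by linarith)]; ring
      _ ≤ s * s := by rw [sq]; gcongr
  linarith [(Real.log_le_iff_le_exp (by linarith)).1 hlog, Real.exp_pos (s / (8 * x) * s)]

theorem pow_five_mul_ceil_sqrt_mul_logb_le {x : ℝ} (hx : 256 ≤ x) :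
    x ^ (5 * ⌈√x * Real.logb 2 x⌉₊) ≤ 2 ^ (6 * (√x * Real.logb 2 x ^ 2)) := by
  have hsqrt : 1 ≤ √x := Real.one_le_sqrt.2 (by linarith)
  have hL := eight_le_logb_two hx
  have hpow : (2 : ℝ) ^ Real.logb 2 x = x := Real.rpow_logb two_pos (by norm_num) (by linarith)
  set L := Real.logb 2 x
  have hceil : ⌈√x * L⌉₊ ≤ √x * L + 1 := (Nat.ceil_lt_add_one (by positivity)).le
  have hexponent : L * (5 * ⌈√x * L⌉₊) ≤ 6 * (√x * L ^ 2) :=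
    calc L * (5 * ⌈√x * L⌉₊) ≤ L * (5 * (√x * L + 1)) := by gcongr
      _ = 5 * (√x * L ^ 2) + L * 5 := by ring
      _ ≤ 5 * (√x * L ^ 2) + L * (√x * L) := by gcongr; nlinarith
      _ = 6 * (√x * L ^ 2) := by ring
  calc x ^ (5 * ⌈√x * L⌉₊) = 2 ^ (L * (5 * ⌈√x * L⌉₊)) := by
        rw [Real.rpow_mul two_pos.le, hpow, ← Real.rpow_natCast, Nat.cast_mul, Nat.cast_ofNat]
    _ ≤ 2 ^ (6 * (√x * L ^ 2)) := Real.rpow_le_rpow_of_exponent_le one_le_two hexponent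

section LargeField

variable {F : Type*} [Field F] [Fintype F] {q : ℕ}

theorem exists_isContainerFamily_isGenPos (hF : Fintype.card F = q) (hq : 256 ≤ q) :
    ∃ 𝒞, IsContainerFamily_s6
        (fun T : Finset (Fin 2 → F) => IsGenPos F 2 T ∧ √q * Real.logb 2 q ≤ #T) (8 * q) 𝒞 ∧
      (#𝒞 : ℝ) ≤ 2 ^ (6 * (√q * Real.logb 2 q ^ 2)) := by
  have hqR : (256 : ℝ) ≤ q := mod_cast hq
  set s := ⌈√q * Real.logb 2 q⌉₊
  obtain ⟨𝒞, h𝒞, hcard⟩ := exists_isContainerFamily_isGenPos_of_card hF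
    (le_eight_mul_exp_of_sqrt_mul_logb_le hqR (Nat.le_ceil _ : _ ≤ (s : ℝ)))
  have hcard_pow : #𝒞 ≤ q ^ (5 * s) :=
    calc #𝒞 ≤ (q ^ 2 * (q ^ 2 + 1)) ^ s := by rwa [mul_pow]
      _ ≤ (q ^ 5) ^ s := by gcongr; nlinarith [Nat.mul_le_mul_right (q ^ 4) hq]
      _ = q ^ (5 * s) := (pow_mul q 5 s).symm
  exact ⟨𝒞, h𝒞.mono fun T hT => ⟨hT.1, Nat.ceil_le.2 hT.2⟩,
    le_trans (mod_cast hcard_pow) (pow_five_mul_ceil_sqrt_mul_logb_le hqR)⟩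

theorem bernoulliProb_exists_isGenPos_le_inv (hF : Fintype.card F = q) (hq : 256 ≤ q) {p k : ℝ}
    (hp0 : 0 ≤ p) (hp1 : p ≤ 1) (hpk : 64 * (p * q) ≤ k)
    (hk : 64 * (√q * Real.logb 2 q ^ 2) ≤ k) :
    bernoulliProb (Fin 2 → F) p (fun S => ∃ T ⊆ S, IsGenPos F 2 T ∧ k ≤ #T) ≤ (q : ℝ)⁻¹ := by
  obtain ⟨𝒞, h𝒞, hcard⟩ := exists_isContainerFamily_isGenPos hF hq
  have hqR : (256 : ℝ) ≤ q := mod_cast hq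
  have hsqrt : 1 ≤ √(q : ℝ) := Real.one_le_sqrt.2 (by linarith)
  have hL := eight_le_logb_two hqR
  have hpow : (2 : ℝ) ^ Real.logb 2 q = q :=
    Real.rpow_logb two_pos (by norm_num) (by linarith)
  set L := Real.logb 2 q
  set m := ⌈k⌉₊
  have hm : k ≤ m := Nat.le_ceil k
  have hLL : L ≤ √q * L ^ 2 := by nlinarith
  have hlarge : ∀ {T : Finset (Fin 2 → F)}, k ≤ #T → √q * L ≤ #T := fun hT => by nlinarith
  have hfirst : (8 * q).choose m * p ^ m ≤ (2⁻¹ : ℝ) ^ m :=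
    choose_mul_pow_le_pow hp0 (by
      push_cast
      nlinarith [Real.exp_one_lt_d9, mul_nonneg hp0 q.cast_nonneg])
  calc bernoulliProb (Fin 2 → F) p (fun S => ∃ T ⊆ S, IsGenPos F 2 T ∧ k ≤ #T)
      = bernoulliProb (Fin 2 → F) p
          (fun S => ∃ T ⊆ S, (IsGenPos F 2 T ∧ √q * L ≤ #T) ∧ m ≤ #T) := by
        congr! 4 with S T
        rw [Nat.ceil_le]
        exact ⟨fun ⟨hTS, hT, hk⟩ => ⟨hTS, ⟨hT, hlarge hk⟩, hk⟩,
          fun ⟨hTS, ⟨hT, _⟩, hk⟩ => ⟨hTS, hT, hk⟩⟩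
    _ ≤ #𝒞 * ((8 * q).choose m * p ^ m) := h𝒞.bernoulliProb_le hp0 hp1 m
    _ ≤ 2 ^ (6 * (√q * L ^ 2)) * (2⁻¹ : ℝ) ^ m := by gcongr
    _ = 2 ^ (6 * (√q * L ^ 2) - m) := by
        rw [Real.rpow_sub two_pos, Real.rpow_natCast, inv_pow, div_eq_mul_inv]
    _ ≤ 2 ^ (-L) := by
        gcongr
        · exact one_le_two
        · linarith
    _ = (q : ℝ)⁻¹ := by rw [Real.rpow_neg two_pos.le, hpow]

end LargeField

end

/-- Upper bounds for the largest general position subset of a `p`-random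
subset of `𝔽_q²`. -/
theorem random_turan_upper_Fq2 :
    ∃ c : ℝ, 0 < c ∧ ∀ δ : ℝ, 0 < δ → ∃ Q : ℕ, ∀ q : ℕ, Q ≤ q → IsPrimePow q →
      ∀ (F : Type) [Field F] [Fintype F], Fintype.card F = q →
        ∀ p : ℝ, 0 ≤ p → p ≤ 1 →
          ((p ≤ (q : ℝ) ^ (-(1 : ℝ) / 2) * (Real.logb 2 q) ^ 2 →
            bernoulliProb (Fin 2 → F) p
              (fun S => ∃ T : Finset (Fin 2 → F), T ⊆ S ∧ IsGenPos F 2 ↑T ∧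
                c * (q : ℝ) ^ ((1 : ℝ) / 2) * (Real.logb 2 q) ^ 2 ≤ (T.card : ℝ)) ≤ δ) ∧
          ((q : ℝ) ^ (-(1 : ℝ) / 2) * (Real.logb 2 q) ^ 2 ≤ p →
            bernoulliProb (Fin 2 → F) p
              (fun S => ∃ T : Finset (Fin 2 → F), T ⊆ S ∧ IsGenPos F 2 ↑T ∧
                c * p * (q : ℝ) ≤ (T.card : ℝ)) ≤ δ)) := by
  refine ⟨64, by norm_num, fun δ hδ => ⟨max 256 ⌈δ⁻¹⌉₊, ?_⟩⟩
  intro q hQ _ F _ _ hF p hp0 hp1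
  obtain ⟨hq, hqδ⟩ := max_le_iff.1 hQ
  have hinv : (q : ℝ)⁻¹ ≤ δ := inv_le_of_inv_le₀ hδ (Nat.ceil_le.1 hqδ)
  have hsqrt : (q : ℝ) ^ ((1 : ℝ) / 2) = √q := (Real.sqrt_eq_rpow _).symm
  have hscale : (q : ℝ) ^ (-(1 : ℝ) / 2) * Real.logb 2 q ^ 2 * q = √q * Real.logb 2 q ^ 2 := by
    rw [mul_right_comm, ← Real.rpow_add_one (by positivity), ← hsqrt]
    norm_num
  constructor
  · intro hp
    rw [hsqrt, mul_assoc]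
    refine (bernoulliProb_exists_isGenPos_le_inv hF hq hp0 hp1 ?_ le_rfl).trans hinv
    rw [← hscale]
    gcongr
  · intro hp
    rw [mul_assoc]
    refine (bernoulliProb_exists_isGenPos_le_inv hF hq hp0 hp1 le_rfl ?_).trans hinv
    rw [← hscale]
    gcongr
end

section
/- For every integer d ≥ 2 there exists a constant c > 0 such that for every prime power q ≥ 2(d+1) and every point set P ⊆ 𝔽_q^d with |P| ≥ q + 2(d+1), the number of (d+1)-element subsets of P that are coplanar (i.e., affinely dependent) is at least c · min{|P|/q − 1, 1} · |P|^{d+1}/q. -/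
/-!
Fix a set `S` of `d - 1` points of `P`. The pencil of `q + 1` hyperplanes through `S` covers the
whole space, so the points of `P \ S` can be coloured with `q + 1` colours in such a way that two
points of the same colour form a coplanar `(d + 1)`-set together with `S`. By Cauchy–Schwarz, a
set of `m` points has at least `m (m - q - 1) / (2 (q + 1))` monochromatic pairs; summing over all
`S`, each coplanar `(d + 1)`-set is counted at most `(d + 1).choose (d - 1)` times.
-/

open Finset Module

section MonochromaticPairs

variable {α β : Type*} [Fintype β] [DecidableEq β]

lemma sq_eq_two_mul_choose_two_add (n : ℕ) : n ^ 2 = 2 * n.choose 2 + n := by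
  induction n with
  | zero => rfl
  | succ n ih =>
    rw [Nat.choose_succ_succ', Nat.choose_one_right]
    linarith

lemma sum_choose_two_card_fiber_le_card_monochromatic_pairs (A : Finset α) (φ : α → β) :
    ∑ b, (#{x ∈ A | φ x = b}).choose 2 ≤ #{e ∈ A.powersetCard 2 | ∃ b, ∀ x ∈ e, φ x = b} := by
  classical
  have hdisj : ((univ : Finset β) : Set β).PairwiseDisjoint
      fun b => ({x ∈ A | φ x = b} : Finset α).powersetCard 2 := by
    intro b _ c _ hbc
    refine Finset.disjoint_left.2 fun e heb hec => hbc ?_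
    rw [mem_powersetCard] at heb hec
    obtain ⟨x, hx⟩ : e.Nonempty := card_pos.1 (by omega)
    exact (mem_filter.1 (heb.1 hx)).2.symm.trans (mem_filter.1 (hec.1 hx)).2
  simp only [← card_powersetCard]
  rw [← card_biUnion hdisj]
  refine card_le_card fun e he => ?_
  obtain ⟨b, -, he⟩ := mem_biUnion.1 he
  obtain ⟨hsub, hcard⟩ := mem_powersetCard.1 he
  exact mem_filter.2 ⟨mem_powersetCard.2 ⟨hsub.trans (filter_subset _ _), hcard⟩,
    b, fun x hx => (mem_filter.1 (hsub hx)).2⟩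

lemma sq_card_le_card_mul_monochromatic_pairs (A : Finset α) (φ : α → β) :
    #A ^ 2 ≤
      Fintype.card β * (2 * #{e ∈ A.powersetCard 2 | ∃ b, ∀ x ∈ e, φ x = b} + #A) := by
  have hA : #A = ∑ b, #{x ∈ A | φ x = b} := card_eq_sum_card_fiberwise fun _ _ => mem_univ _
  calc #A ^ 2 = (∑ b, #{x ∈ A | φ x = b}) ^ 2 := by rw [← hA]
    _ ≤ Fintype.card β * ∑ b, #{x ∈ A | φ x = b} ^ 2 := sq_sum_le_card_mul_sum_sq
    _ = Fintype.card β * (2 * ∑ b, (#{x ∈ A | φ x = b}).choose 2 + #A) := by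
        simp only [sq_eq_two_mul_choose_two_add, sum_add_distrib, ← mul_sum, ← hA]
    _ ≤ _ := by
        gcongr
        exact sum_choose_two_card_fiber_le_card_monochromatic_pairs A φ

end MonochromaticPairs

lemma card_filter_subset_powersetCard_le {α : Type*} [DecidableEq α] (P T : Finset α) (k : ℕ) :
    #{S ∈ P.powersetCard k | S ⊆ T} ≤ (#T).choose k := by
  rw [← card_powersetCard]
  refine card_le_card fun S hS => ?_
  obtain ⟨hS, hST⟩ := mem_filter.1 hS
  exact mem_powersetCard.2 ⟨hST, (mem_powersetCard.1 hS).2⟩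

section HyperplaneCover

variable {F V A : Type*} [Field F] [AddCommGroup V] [Module F V] [AddTorsor V A]

/-- For independent functionals `f` and `g` vanishing on `W`, the kernels of `g` and of all
`f - r • g` cover `V`. -/
lemma exists_proper_submodule_cover (W : Submodule F V) (hW : finrank F W + 2 ≤ finrank F V) :
    ∃ H : Option F → Submodule F V, (∀ c, W ≤ H c ∧ H c ≠ ⊤) ∧ ∀ v, ∃ c, v ∈ H c := by
  have : FiniteDimensional F V := finite_of_finrank_pos (by omega)
  have hdim : 1 < finrank F W.dualAnnihilator := by
    have := Subspace.finrank_add_finrank_dualAnnihilator_eq W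
    omega
  have : Nontrivial W.dualAnnihilator := nontrivial_of_finrank_pos (R := F) (by omega)
  obtain ⟨f, hf⟩ := exists_ne (0 : W.dualAnnihilator)
  obtain ⟨g, hfg⟩ := exists_linearIndependent_pair_of_one_lt_finrank
    (R := F) (M := W.dualAnnihilator) hdim hf
  replace hfg := LinearIndependent.pair_iff.1 hfg
  let h : Option F → W.dualAnnihilator := fun c => c.elim g fun r => f - r • g
  have hne : ∀ c, h c ≠ 0
    | none => fun h0 => one_ne_zero (hfg 0 1 (by simpa [h] using h0)).2
    | some r => fun h0 => one_ne_zero (hfg 1 (-r) (by simpa [h, ← sub_eq_add_neg] using h0)).1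
  refine ⟨fun c => LinearMap.ker (h c : Dual F V),
    fun c => ⟨fun w hw => ?_, fun htop => ?_⟩, fun v => ?_⟩
  · exact (Submodule.mem_dualAnnihilator _).1 (h c).2 w hw
  · exact hne c (Subtype.ext (LinearMap.ker_eq_top.1 htop))
  · by_cases hg : (g : Dual F V) v = 0
    · exact ⟨none, hg⟩
    · exact ⟨some ((f : Dual F V) v / (g : Dual F V) v), by simp [h, hg]⟩

lemma exists_proper_affineSubspace_cover {S : Finset A} (hS : S.Nonempty)
    (hcard : #S + 1 ≤ finrank F V) :
    ∃ H : Option F → AffineSubspace F A,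
      (∀ c, (S : Set A) ⊆ H c ∧ H c ≠ ⊤) ∧ ∀ x, ∃ c, x ∈ H c := by
  have := hS.to_subtype
  have hspan := finrank_vectorSpan_range_add_one_le F ((↑) : S → A)
  rw [Subtype.range_coe_subtype, setOfPred_mem, Fintype.card_coe] at hspan
  obtain ⟨p, hp⟩ := hS
  obtain ⟨H, hH, hcover⟩ := exists_proper_submodule_cover (vectorSpan F (S : Set A)) (by omega)
  refine ⟨fun c => AffineSubspace.mk' p (H c), fun c => ⟨fun s hs => ?_, fun htop => ?_⟩,
    fun x => hcover (x -ᵥ p)⟩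
  · exact (hH c).1 (vsub_mem_vectorSpan F hs hp)
  · refine (hH c).2 ?_
    rw [← AffineSubspace.direction_mk' p (H c), show AffineSubspace.mk' p (H c) = ⊤ from htop,
      AffineSubspace.direction_top]

lemma not_affineIndependent_of_subset_of_ne_top [FiniteDimensional F V] {T : Finset A}
    (hT : #T = finrank F V + 1) {H : AffineSubspace F A} (hTH : (T : Set A) ⊆ H) (hH : H ≠ ⊤) :
    ¬ AffineIndependent F ((↑) : T → A) := by
  intro hind
  have hspan : affineSpan F (Set.range ((↑) : T → A)) = ⊤ :=
    hind.affineSpan_eq_top_iff_card_eq_finrank_add_one.2 (by simp [hT])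
  rw [Subtype.range_coe_subtype, setOfPred_mem] at hspan
  exact hH (top_le_iff.1 (hspan ▸ affineSpan_le.2 hTH))

end HyperplaneCover

section CoplanarSubsets

variable (F : Type*) {V A : Type*} [Field F] [AddCommGroup V] [Module F V] [AddTorsor V A]

open Classical in
/-- The coplanar `(d + 1)`-element subsets of `P`, where `d` is the dimension of the ambient affine
space; coplanarity is encoded as affine dependence. -/
noncomputable def coplanarSubsets (P : Finset A) : Finset (Finset A) :=
  {T ∈ P.powersetCard (finrank F V + 1) | ¬ AffineIndependent F ((↑) : T → A)}

variable {F} in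
lemma mem_coplanarSubsets {P T : Finset A} :
    T ∈ coplanarSubsets F P ↔
      T ⊆ P ∧ #T = finrank F V + 1 ∧ ¬ AffineIndependent F ((↑) : T → A) := by
  simp only [coplanarSubsets, mem_filter, mem_powersetCard, and_assoc]

variable [Fintype F]

lemma sq_card_sdiff_le_mul_card_coplanarSubsets_superset [DecidableEq A] {P S : Finset A}
    (hSP : S ⊆ P) (hS : S.Nonempty) (hcard : #S + 1 = finrank F V) :
    #(P \ S) ^ 2 ≤
      (Fintype.card F + 1) * (2 * #{T ∈ coplanarSubsets F P | S ⊆ T} + #(P \ S)) := by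
  classical
  have : FiniteDimensional F V := finite_of_finrank_pos (by omega)
  obtain ⟨H, hH, hcover⟩ := exists_proper_affineSubspace_cover (F := F) hS hcard.le
  choose φ hφ using hcover
  have hpairs := sq_card_le_card_mul_monochromatic_pairs (P \ S) φ
  rw [Fintype.card_option] at hpairs
  refine hpairs.trans ?_
  gcongr _ * (2 * ?_ + _)
  refine card_le_card_of_injOn (S ∪ ·) (fun e he => ?_) fun e he e' he' (heq : S ∪ e = S ∪ e') => ?_
  · obtain ⟨heP, c, hc⟩ := mem_filter.1 he
    obtain ⟨heP, hecard⟩ := mem_powersetCard.1 heP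
    have hunion : #(S ∪ e) = finrank F V + 1 := by
      rw [card_union_of_disjoint (disjoint_sdiff.mono_right heP)]
      omega
    have hplane : ((S ∪ e : Finset A) : Set A) ⊆ H c := by
      rw [coe_union]
      exact Set.union_subset (hH c).1 fun x hx => hc x hx ▸ hφ x
    exact mem_filter.2 ⟨mem_coplanarSubsets.2 ⟨union_subset hSP (heP.trans sdiff_subset), hunion,
      not_affineIndependent_of_subset_of_ne_top hunion hplane (hH c).2⟩, subset_union_left⟩
  · have heS := (mem_powersetCard.1 (mem_filter.1 he).1).1
    have heS' := (mem_powersetCard.1 (mem_filter.1 he').1).1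
    rw [← union_sdiff_cancel_left (disjoint_sdiff.mono_right heS), heq,
      union_sdiff_cancel_left (disjoint_sdiff.mono_right heS')]

lemma le_card_coplanarSubsets_superset [DecidableEq A] {P S : Finset A} (hSP : S ⊆ P)
    (hS : S.Nonempty) (hcard : #S + 1 = finrank F V) :
    ((#P - #S) * (#P - #S - (Fintype.card F + 1)) / (2 * (Fintype.card F + 1)) : ℝ) ≤
      #{T ∈ coplanarSubsets F P | S ⊆ T} := by
  have hsq := sq_card_sdiff_le_mul_card_coplanarSubsets_superset F hSP hS hcard
  rify at hsq
  rw [cast_card_sdiff hSP] at hsq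
  rw [div_le_iff₀ (by positivity)]
  linarith

lemma choose_mul_le_mul_card_coplanarSubsets {k : ℕ} (hk : 0 < k) (hdim : finrank F V = k + 1)
    (P : Finset A) :
    (#P).choose k * ((#P - k) * (#P - k - (Fintype.card F + 1)) / (2 * (Fintype.card F + 1)) : ℝ) ≤
      #(coplanarSubsets F P) * (k + 2).choose k := by
  classical
  rw [← nsmul_eq_mul, ← nsmul_eq_mul, ← card_powersetCard k P]
  refine card_nsmul_le_card_nsmul (· ⊆ ·) (fun S hS => ?_) fun T hT => ?_
  · obtain ⟨hSP, rfl⟩ := mem_powersetCard.1 hS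
    exact le_card_coplanarSubsets_superset F hSP (card_pos.1 hk) hdim.symm
  · have hTcard : #T = k + 2 := by rw [(mem_coplanarSubsets.1 hT).2.1, hdim]
    exact Nat.cast_le.2 (hTcard ▸ card_filter_subset_powersetCard_le P T k)

end CoplanarSubsets

section Estimates

variable {n k q : ℕ}

lemma pow_le_two_pow_mul_factorial_mul_choose (hkn : 2 * k ≤ n + 2) :
    (n : ℝ) ^ k ≤ 2 ^ k * k.factorial * n.choose k := by
  have hhalf : n ≤ 2 * (n + 1 - k) := by omega
  have hdesc : (n + 1 - k) ^ k ≤ k.factorial * n.choose k :=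
    (Nat.pow_sub_le_descFactorial n k).trans_eq (Nat.descFactorial_eq_factorial_mul_choose n k)
  have hpow : n ^ k ≤ 2 ^ k * k.factorial * n.choose k :=
    calc n ^ k ≤ (2 * (n + 1 - k)) ^ k := by gcongr
      _ = 2 ^ k * (n + 1 - k) ^ k := mul_pow ..
      _ ≤ 2 ^ k * (k.factorial * n.choose k) := by gcongr
      _ = 2 ^ k * k.factorial * n.choose k := (mul_assoc ..).symm
  exact_mod_cast hpow

lemma min_div_sub_one_mul_le {x y : ℝ} (hy : 0 < y) (hyx : y ≤ x) :
    min (x / y - 1) 1 * x ≤ 2 * (x - y) := by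
  have hx : 0 ≤ x := hy.le.trans hyx
  rcases le_total x (2 * y) with hle | hge
  · calc min (x / y - 1) 1 * x ≤ (x / y - 1) * (2 * y) :=
          mul_le_mul (min_le_left _ _) hle hx (sub_nonneg.2 ((one_le_div hy).2 hyx))
      _ = 2 * (x - y) := by field_simp
  · calc min (x / y - 1) 1 * x ≤ 1 * x := by gcongr; exact min_le_right _ _
      _ ≤ 2 * (x - y) := by linarith

lemma min_mul_pow_div_le_choose_mul (hq : 0 < q) (hn : q + 2 * (k + 1) ≤ n) :
    min ((n : ℝ) / q - 1) 1 * (n : ℝ) ^ (k + 2) / q ≤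
      32 * (2 ^ k * k.factorial) *
        (n.choose k * ((n - k) * (n - k - (q + 1)) / (2 * (q + 1)))) := by
  have hqR : (1 : ℝ) ≤ q := by exact_mod_cast hq
  have hnR : (q : ℝ) + 2 * (k + 1) ≤ n := by exact_mod_cast hn
  have hsub : (0 : ℝ) ≤ n - q := sub_nonneg.2 (Nat.cast_le.2 (by omega))
  have hpow := pow_le_two_pow_mul_factorial_mul_choose (n := n) (k := k) (by omega)
  have hmin : min ((n : ℝ) / q - 1) 1 * n ≤ 2 * (n - q) :=
    min_div_sub_one_mul_le (by linarith) (by linarith)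
  have hprod : (n : ℝ) / 2 * ((n - q) / 2) ≤ (n - k) * (n - k - (q + 1)) := by
    apply mul_le_mul <;> linarith
  have hrecip : (1 : ℝ) / q ≤ 2 / (q + 1) := by
    rw [div_le_div_iff₀ (by linarith) (by linarith)]
    linarith
  calc min ((n : ℝ) / q - 1) 1 * (n : ℝ) ^ (k + 2) / q
      = n ^ k * n * (min ((n : ℝ) / q - 1) 1 * n) * (1 / q) := by ring
    _ ≤ n ^ k * n * (2 * (n - q)) * (1 / q) := by gcongr
    _ ≤ 2 ^ k * k.factorial * n.choose k * n * (2 * (n - q)) * (2 / (q + 1)) := by gcongr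
    _ = 32 * (2 ^ k * k.factorial) *
          (n.choose k * (n / 2 * ((n - q) / 2) / (2 * (q + 1)))) := by field_simp; ring
    _ ≤ _ := by gcongr

end Estimates

theorem supersaturation_coplanar_tuples_general (d : ℕ) (hd : 2 ≤ d) :
    ∃ c : ℝ, 0 < c ∧ ∀ (F V A : Type*) [Field F] [Fintype F] [AddCommGroup V] [Module F V]
      [AddTorsor V A], finrank F V = d → ∀ P : Finset A, Fintype.card F + 2 * d ≤ #P →
        c * min ((#P : ℝ) / Fintype.card F - 1) 1 * (#P : ℝ) ^ (d + 1) / Fintype.card F ≤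
          ({T : Finset A | T ⊆ P ∧ #T = d + 1 ∧
            ¬ AffineIndependent F ((↑) : T → A)}.ncard : ℝ) := by
  obtain ⟨k, rfl⟩ : ∃ k, d = k + 1 := ⟨d - 1, by omega⟩
  have hchoose : 0 < (k + 2).choose k := Nat.choose_pos (by omega)
  refine ⟨1 / (32 * (2 ^ k * k.factorial) * (k + 2).choose k), by positivity, ?_⟩
  intro F V A _ _ _ _ _ hdim P hP
  have hset : {T : Finset A | T ⊆ P ∧ #T = k + 1 + 1 ∧ ¬ AffineIndependent F ((↑) : T → A)} =
      coplanarSubsets F P := by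
    ext T
    simp only [Set.mem_ofPred_eq, mem_coe, mem_coplanarSubsets, hdim]
  rw [hset, Set.ncard_coe_finset]
  calc 1 / (32 * (2 ^ k * k.factorial) * (k + 2).choose k) *
        min ((#P : ℝ) / Fintype.card F - 1) 1 * (#P : ℝ) ^ (k + 2) / Fintype.card F
      = min ((#P : ℝ) / Fintype.card F - 1) 1 * (#P : ℝ) ^ (k + 2) / Fintype.card F /
          (32 * (2 ^ k * k.factorial) * (k + 2).choose k) := by ring
    _ ≤ 32 * (2 ^ k * k.factorial) * (#(coplanarSubsets F P) * (k + 2).choose k) /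
          (32 * (2 ^ k * k.factorial) * (k + 2).choose k) := by
        grw [min_mul_pow_div_le_choose_mul Fintype.card_pos hP,
          choose_mul_le_mul_card_coplanarSubsets F (by omega) hdim]
    _ = #(coplanarSubsets F P) := by field_simp

/-- Supersaturation for coplanar `(d+1)`-tuples in `𝔽_q^d`: if
`|P| ≥ q + 2(d+1)` then `P` contains at least `c·min{|P|/q − 1, 1}·|P|^{d+1}/q`
coplanar (affinely dependent) `(d+1)`-element subsets. -/
theorem supersaturation_coplanar_tuples (d : ℕ) (hd : 2 ≤ d) :
    ∃ c : ℝ, 0 < c ∧ ∀ q : ℕ, IsPrimePow q → 2 * (d + 1) ≤ q →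
      ∀ (F : Type) [Field F] [Fintype F], Fintype.card F = q →
        ∀ P : Finset (Fin d → F), q + 2 * (d + 1) ≤ P.card →
          c * min ((P.card : ℝ) / (q : ℝ) - 1) 1 * (P.card : ℝ) ^ (d + 1) / (q : ℝ)
            ≤ (({t : Finset (Fin d → F) | t ⊆ P ∧ t.card = d + 1 ∧
                  ¬ AffineIndependent F ((↑) : t → (Fin d → F))}).ncard : ℝ) := by
  obtain ⟨c, hc, hbound⟩ := supersaturation_coplanar_tuples_general d hd
  exact ⟨c, hc, fun q _ _ F _ _ hq P hP => hq ▸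
    hbound F (Fin d → F) (Fin d → F) (finrank_fin_fun F) P (by omega)⟩
end

section
/- For every integer d ≥ 2 there exists a constant c > 0 such that for every prime power q ≥ 2(d+1) and every point set P ⊆ 𝔽_q^d with |P| ≥ q + 2(d+1), the (d+1)-uniform hypergraph H on vertex set P whose edges are the coplanar (affinely dependent) (d+1)-element subsets of P is (c, τ)-bounded, where k = |P|/q and τ = (min{k − 1, 1})^{−d/(d+1)} · k^{−1} · q^{−1/(d+1)}. -/
/-- The edge set of the `(d+1)`-uniform hypergraph on vertex set `P ⊆ 𝔽_q^d` whose edges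
are the coplanar (affinely dependent) `(d+1)`-element subsets of `P`. -/
def coplanarEdges (F : Type*) [Field F] (d : ℕ) (P : Finset (Fin d → F)) :
    Set (Finset (Fin d → F)) :=
  {t | t ⊆ P ∧ t.card = d + 1 ∧ ¬ AffineIndependent F ((↑) : t → (Fin d → F))}

/-! Fix `d - 1` points `S` of `X`. Their span lies in a pencil of `q + 1` hyperplanes covering the
space, so by Cauchy–Schwarz many pairs of points of `X \ S` share a hyperplane of the pencil, and
each such pair completes `S` to an edge. Summing over `S` bounds the number `h` of edges from below
by a constant times `min (k - 1) 1 * N ^ (d + 1) / q`, where `N = |X| = k q`.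

For `i ≥ 3` the trivial bound `N ^ (d + 1 - i)` on the degrees then suffices. For a pair `U`, every
edge containing `U` has a point outside `U` in the span of its other `d` points. If such a span
contains at most `L` points of `X`, with `L` attained, then the degree of `U` is at most
`N ^ (d - 2) * L`. On the other hand all `(d + 1)`-subsets of the `L` points are edges, which bounds
`L ^ (d + 1)` by a constant times `h`. -/

open Finset Module

section Combinatorics

variable {α β : Type*}

theorem pow_le_pow_mul_choose {r n : ℕ} (h : r ≤ n) : n ^ r ≤ r ^ r * n.choose r := by
  induction r generalizing n with
  | zero => simp
  | succ r ih =>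
    obtain ⟨m, rfl⟩ : ∃ m, n = m + 1 := ⟨n - 1, by omega⟩
    have hrm : r ≤ m := by omega
    have hpow : (m + 1) ^ r ≤ (r + 1) ^ r * m.choose r := by
      refine Nat.le_of_mul_le_mul_left ?_ (Nat.pow_self_pos (n := r))
      calc r ^ r * (m + 1) ^ r = (r * (m + 1)) ^ r := (mul_pow ..).symm
        _ ≤ ((r + 1) * m) ^ r := by gcongr ?_ ^ r; linarith
        _ = (r + 1) ^ r * m ^ r := mul_pow ..
        _ ≤ (r + 1) ^ r * (r ^ r * m.choose r) := by gcongr; exact ih hrm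
        _ = r ^ r * ((r + 1) ^ r * m.choose r) := by ring
    calc (m + 1) ^ (r + 1) = (m + 1) * (m + 1) ^ r := pow_succ' ..
      _ ≤ (m + 1) * ((r + 1) ^ r * m.choose r) := by gcongr
      _ = (r + 1) ^ r * ((m + 1) * m.choose r) := by ring
      _ = (r + 1) ^ (r + 1) * (m + 1).choose (r + 1) := by
        rw [Nat.add_one_mul_choose_eq]; ring

theorem pow_le_pow_mul_of_choose_le {r n h : ℕ} (hh : 1 ≤ h) (hc : n.choose r ≤ h) :
    n ^ r ≤ r ^ r * h := by
  rcases le_total r n with hrn | hnr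
  · exact (pow_le_pow_mul_choose hrn).trans (by gcongr)
  · calc n ^ r ≤ r ^ r := by gcongr
      _ ≤ r ^ r * h := Nat.le_mul_of_pos_right _ hh

theorem card_sq_le_card_mul_sum_choose_two [Fintype β] [DecidableEq β]
    (A : Finset α) (f : α → β) :
    #A ^ 2 ≤ Fintype.card β * (2 * ∑ b, (#{x ∈ A | f x = b}).choose 2 + #A) := by
  have hA : #A = ∑ b, #{x ∈ A | f x = b} := card_eq_sum_card_fiberwise (by simp)
  have hsq (n : ℕ) : n ^ 2 = 2 * n.choose 2 + n := by
    rw [Nat.choose_two_right, Nat.mul_div_cancel' (Nat.even_mul_pred_self n).two_dvd]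
    cases n <;> grind
  calc #A ^ 2 = (∑ b, #{x ∈ A | f x = b}) ^ 2 := by rw [← hA]
    _ ≤ Fintype.card β * ∑ b, #{x ∈ A | f x = b} ^ 2 := sq_sum_le_card_mul_sum_sq
    _ = Fintype.card β * (2 * ∑ b, (#{x ∈ A | f x = b}).choose 2 + #A) := by
      simp only [hsq, sum_add_distrib, ← mul_sum, ← hA]

open Classical in
/-- The degree `δ(U)` of a vertex set `U` in a hypergraph given by its edge set `H`: the number
of edges containing `U`. -/
noncomputable def setDegree (H : Finset (Finset α)) (U : Finset α) : ℕ :=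
  #{t ∈ H | U ⊆ t}

/-- The notion of a `(c, τ)`-bounded `r`-uniform hypergraph, with vertex set `V` and edge set `H`:
each maximum degree `Δ_i(H)`, `2 ≤ i ≤ r`, is at most `c (|H| / |V|) τ ^ (i - 1)`. Uniformity is
not part of the definition. -/
def IsBoundedHypergraph (r : ℕ) (c τ : ℝ) (V : Finset α) (H : Finset (Finset α)) : Prop :=
  ∀ i, 2 ≤ i → i ≤ r → ∀ U ⊆ V, #U = i →
    (setDegree H U : ℝ) ≤ c * ((#H : ℝ) / (#V : ℝ)) * τ ^ (i - 1)

theorem setDegree_le_pow {V : Finset α} {H : Finset (Finset α)} {r : ℕ}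
    (hH : H ⊆ V.powersetCard r) (U : Finset α) : setDegree H U ≤ #V ^ (r - #U) := by
  classical
  calc setDegree H U ≤ #(V.powersetCard (r - #U)) := by
        refine card_le_card_of_injOn (· \ U) (fun _ ht => ?_) fun s hs t ht hst => ?_
        · obtain ⟨htH, hUt⟩ := mem_filter.1 ht
          obtain ⟨htV, htr⟩ := mem_powersetCard.1 (hH htH)
          exact mem_coe.2 (mem_powersetCard.2
            ⟨sdiff_subset.trans htV, by rw [card_sdiff_of_subset hUt, htr]⟩)
        · dsimp only at hst
          rw [← sdiff_union_of_subset (mem_filter.1 hs).2, hst,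
            sdiff_union_of_subset (mem_filter.1 ht).2]
    _ = (#V).choose (r - #U) := card_powersetCard ..
    _ ≤ #V ^ (r - #U) := Nat.choose_le_pow ..

theorem sum_powersetCard_setDegree {V : Finset α} {H : Finset (Finset α)} {r : ℕ}
    (hH : H ⊆ V.powersetCard r) (k : ℕ) :
    ∑ S ∈ V.powersetCard k, setDegree H S = r.choose k * #H := by
  classical
  calc ∑ S ∈ V.powersetCard k, setDegree H S
      = ∑ t ∈ H, #{S ∈ V.powersetCard k | S ⊆ t} := by
        convert! sum_card_bipartiteAbove_eq_sum_card_bipartiteBelow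
          (s := V.powersetCard k) (t := H) (fun S t : Finset α => S ⊆ t) using 1
    _ = ∑ _ ∈ H, r.choose k := by
        refine sum_congr rfl fun t ht => ?_
        obtain ⟨htV, htr⟩ := mem_powersetCard.1 (hH ht)
        rw [← htr, ← card_powersetCard]
        congr 1
        ext S
        simp only [mem_filter, mem_powersetCard]
        exact ⟨fun h => ⟨h.2, h.1.2⟩, fun h => ⟨⟨h.1.trans htV, h.2⟩, h.1⟩⟩
    _ = r.choose k * #H := by rw [sum_const, smul_eq_mul, mul_comm]

open Classical in
theorem sum_choose_card_fiber_le_setDegree [Fintype β] [DecidableEq β]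
    {A S : Finset α} {H : Finset (Finset α)} {r : ℕ} (hr : r ≠ 0) (hAS : Disjoint S A) (f : α → β)
    (h : ∀ b, ∀ p ∈ powersetCard r {x ∈ A | f x = b}, S ∪ p ∈ H) :
    ∑ b, (#{x ∈ A | f x = b}).choose r ≤ setDegree H S := by
  simp only [← card_powersetCard, ← card_sigma]
  refine card_le_card_of_injOn (fun z => S ∪ z.2) ?_ ?_
  · rintro ⟨b, p⟩ hp
    exact mem_coe.2 (mem_filter.2 ⟨h b p (mem_sigma.1 hp).2, subset_union_left⟩)
  · rintro ⟨b, p⟩ hp ⟨b', p'⟩ hp' hpp'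
    obtain ⟨hpA, hpr⟩ := mem_powersetCard.1 (mem_sigma.1 hp).2
    obtain ⟨hpA', -⟩ := mem_powersetCard.1 (mem_sigma.1 hp').2
    have hdisj {b : β} {p : Finset α} (hp : p ⊆ {x ∈ A | f x = b}) : Disjoint S p :=
      hAS.mono_right (hp.trans (filter_subset _ _))
    obtain rfl : p = p' :=
      (union_sdiff_cancel_left (hdisj hpA)).symm.trans
        ((congrArg (· \ S) hpp').trans (union_sdiff_cancel_left (hdisj hpA')))
    obtain ⟨x, hx⟩ : p.Nonempty := card_ne_zero.1 (hpr ▸ hr)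
    obtain rfl : b = b' := (mem_filter.1 (hpA hx)).2.symm.trans (mem_filter.1 (hpA' hx)).2
    rfl

end Combinatorics

section AffineDependence

variable {K V E : Type*} [DivisionRing K] [AddCommGroup V] [Module K V] [AddTorsor V E]

theorem affineIndependent_insert {s : Set E} {a : E} (hs : AffineIndependent K ((↑) : s → E))
    (ha : a ∉ affineSpan K s) : AffineIndependent K ((↑) : ↥(insert a s) → E) := by
  have hne {y : ↥(insert a s)} (hy : y ≠ ⟨a, s.mem_insert a⟩) : (y : E) ∈ s :=
    y.2.resolve_left fun h => hy (Subtype.ext h)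
  let toBase : {y : ↥(insert a s) // y ≠ ⟨a, s.mem_insert a⟩} ↪ s :=
    ⟨fun y => ⟨y, hne y.2⟩, fun _ _ h =>
      Subtype.ext (Subtype.ext (congrArg (Subtype.val : s → E) h))⟩
  refine AffineIndependent.affineIndependent_of_notMem_span (i := ⟨a, s.mem_insert a⟩)
    (hs.comp_embedding toBase) ?_
  refine fun h => ha (affineSpan_mono K ?_ h)
  rintro _ ⟨y, hy, rfl⟩
  exact hne hy

theorem affineIndependent_of_card_eq_two {U : Finset E} (hU : #U = 2) :
    AffineIndependent K ((↑) : U → E) := by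
  classical
  obtain ⟨x, y, hxy, rfl⟩ := card_eq_two.1 hU
  have hx : x ∉ affineSpan K {y} := by rwa [AffineSubspace.mem_affineSpan_singleton]
  have h := affineIndependent_insert (affineIndependent_of_subsingleton K _) hx
  rwa [← coe_pair] at h

theorem exists_mem_affineSpan_erase [DecidableEq E] {U t : Finset E} (hUt : U ⊆ t)
    (hU : AffineIndependent K ((↑) : U → E)) (ht : ¬ AffineIndependent K ((↑) : t → E)) :
    ∃ w ∈ t, w ∉ U ∧ w ∈ affineSpan K (t.erase w : Set E) := by
  classical
  obtain ⟨B, hUB, hB⟩ := ({B ∈ t.powerset | AffineIndependent (V := V) K ((↑) : B → E)} :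
    Finset (Finset E)).exists_le_maximal (mem_filter.2 ⟨mem_powerset.2 hUt, hU⟩)
  obtain ⟨hBt, hBind⟩ := mem_filter.1 hB.prop
  rw [mem_powerset] at hBt
  obtain ⟨w, hwt, hwB⟩ := exists_of_ssubset (hBt.ssubset_of_ne fun h => ht (h ▸ hBind))
  refine ⟨w, hwt, fun h => hwB (hUB h), by_contra fun hw => hwB ?_⟩
  have hins : AffineIndependent K ((↑) : ↥(insert w B) → E) := by
    have hwspan : w ∉ affineSpan K (B : Set E) := fun h =>
      hw (affineSpan_mono K (coe_subset.2 (subset_erase.2 ⟨hBt, hwB⟩)) h)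
    have h := affineIndependent_insert hBind hwspan
    rwa [← coe_insert] at h
  exact hB.le_of_ge (mem_filter.2 ⟨mem_powerset.2 (insert_subset hwt hBt), hins⟩)
    (subset_insert w B) (mem_insert_self w B)

theorem finrank_vectorSpan_add_one_le_card {T : Finset E} (hT : T.Nonempty) :
    finrank K (vectorSpan K (T : Set E)) + 1 ≤ #T := by
  have := hT.to_subtype
  have hrange : Set.range ((↑) : T → E) = T := Subtype.range_coe
  have h := finrank_vectorSpan_range_add_one_le K ((↑) : T → E)
  rwa [hrange, Fintype.card_coe] at h

theorem affineSpan_ne_top_of_card_le_finrank {T : Finset E} (hT : #T ≤ finrank K V) :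
    affineSpan K (T : Set E) ≠ ⊤ := by
  intro htop
  have hne : T.Nonempty := by
    rw [← coe_nonempty, ← affineSpan_nonempty K, htop]
    exact ⟨Classical.arbitrary E, trivial⟩
  have := finrank_vectorSpan_add_one_le_card (K := K) hne
  rw [AffineSubspace.vectorSpan_eq_top_of_affineSpan_eq_top K V E htop, finrank_top] at this
  omega

theorem not_affineIndependent_of_subset_ne_top [FiniteDimensional K V] {H : AffineSubspace K E}
    (hH : H ≠ ⊤) {t : Finset E} (htH : (t : Set E) ⊆ H) (ht : #t = finrank K V + 1) :
    ¬ AffineIndependent K ((↑) : t → E) := by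
  intro hind
  have hspan := hind.affineSpan_eq_top_iff_card_eq_finrank_add_one.2 (by simpa using ht)
  exact hH (top_le_iff.1 (hspan ▸ affineSpan_le.2 (by simpa using htH)))

open Classical in
variable (K) in
/-- The hypergraph of affinely dependent `n`-element subsets of `X`. In an affine space of
dimension `n - 1` these are the coplanar `n`-element subsets. -/
noncomputable def affineDependentSubsets (n : ℕ) (X : Finset E) : Finset (Finset E) :=
  {t ∈ X.powersetCard n | ¬ AffineIndependent (V := V) K ((↑) : t → E)}

theorem mem_affineDependentSubsets {n : ℕ} {X t : Finset E} :
    t ∈ affineDependentSubsets K n X ↔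
      t ⊆ X ∧ #t = n ∧ ¬ AffineIndependent K ((↑) : t → E) := by
  classical
  rw [affineDependentSubsets, mem_filter, mem_powersetCard, and_assoc]

theorem affineDependentSubsets_subset {n : ℕ} {X : Finset E} :
    affineDependentSubsets K n X ⊆ X.powersetCard n := by
  classical exact filter_subset ..

open Classical in
theorem setDegree_affineDependentSubsets_le {n L : ℕ} {X U : Finset E}
    (hU : AffineIndependent K ((↑) : U → E))
    (hL : ∀ T ∈ X.powersetCard n, #{p ∈ X | p ∈ affineSpan K (T : Set E)} ≤ L) :
    setDegree (affineDependentSubsets K (n + 1) X) U ≤ #X ^ (n - #U) * L := by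
  let bases : Finset (Finset E) := {T ∈ X.powersetCard n | U ⊆ T}
  let extensions (T : Finset E) : Finset (Finset E) :=
    {p ∈ X | p ∈ affineSpan K (T : Set E)}.image (insert · T)
  have hcover : {t ∈ affineDependentSubsets K (n + 1) X | U ⊆ t} ⊆
      bases.biUnion extensions := by
    intro t ht
    obtain ⟨htmem, hUt⟩ := mem_filter.1 ht
    obtain ⟨htX, htcard, htdep⟩ := mem_affineDependentSubsets.1 htmem
    obtain ⟨w, hwt, hwU, hwspan⟩ := exists_mem_affineSpan_erase hUt hU htdep
    refine mem_biUnion.2 ⟨t.erase w, mem_filter.2 ⟨mem_powersetCard.2 ⟨?_, ?_⟩, ?_⟩,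
      mem_image.2 ⟨w, mem_filter.2 ⟨htX hwt, hwspan⟩, insert_erase hwt⟩⟩
    · exact (erase_subset w t).trans htX
    · rw [card_erase_of_mem hwt, htcard, Nat.add_sub_cancel]
    · exact subset_erase.2 ⟨hUt, hwU⟩
  calc setDegree (affineDependentSubsets K (n + 1) X) U
      ≤ #(bases.biUnion extensions) := card_le_card hcover
    _ ≤ #bases * L := card_biUnion_le_card_mul _ _ _ fun T hT =>
        card_image_le.trans (hL T (mem_filter.1 hT).1)
    _ ≤ #X ^ (n - #U) * L := by
        gcongr
        exact setDegree_le_pow Subset.rfl U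

open Classical in
theorem choose_card_affineSpan_le [FiniteDimensional K V] (X : Finset E) {T : Finset E}
    (hT : #T ≤ finrank K V) :
    (#{p ∈ X | p ∈ affineSpan K (T : Set E)}).choose (finrank K V + 1) ≤
      #(affineDependentSubsets K (finrank K V + 1) X) := by
  rw [← card_powersetCard]
  refine card_le_card fun t ht => mem_affineDependentSubsets.2 ?_
  obtain ⟨htspan, htcard⟩ := mem_powersetCard.1 ht
  exact ⟨htspan.trans (filter_subset _ _), htcard,
    not_affineIndependent_of_subset_ne_top (affineSpan_ne_top_of_card_le_finrank hT)
      (fun p hp => (mem_filter.1 (htspan hp)).2) htcard⟩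

theorem exists_setDegree_le_pow_mul [FiniteDimensional K V] {X U : Finset E}
    (hU : AffineIndependent K ((↑) : U → E)) (hX : finrank K V ≤ #X)
    (hne : (affineDependentSubsets K (finrank K V + 1) X).Nonempty) :
    ∃ L : ℕ, setDegree (affineDependentSubsets K (finrank K V + 1) X) U ≤
        #X ^ (finrank K V - #U) * L ∧
      L ^ (finrank K V + 1) ≤ (finrank K V + 1) ^ (finrank K V + 1) *
        #(affineDependentSubsets K (finrank K V + 1) X) := by
  classical
  obtain ⟨T, hT, hTmax⟩ := exists_max_image (X.powersetCard (finrank K V))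
    (fun T => #{p ∈ X | p ∈ affineSpan K (T : Set E)}) (powersetCard_nonempty.2 hX)
  exact ⟨_, setDegree_affineDependentSubsets_le hU hTmax,
    pow_le_pow_mul_of_choose_le hne.card_pos
      (choose_card_affineSpan_le X (mem_powersetCard.1 hT).2.le)⟩

end AffineDependence

section Pencil

variable {K V E : Type*} [Field K] [AddCommGroup V] [Module K V] [AddTorsor V E]

/- In the dual of `V ⧸ W` take independent functionals `f` and `g`; the members of the pencil are
the kernels of `f` and of `g - c • f` for `c : K`. -/
theorem exists_submodule_pencil {W : Submodule K V} (hW : 1 < finrank K (V ⧸ W)) :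
    ∃ H : Option K → Submodule K V, (∀ o, W ≤ H o ∧ H o ≠ ⊤) ∧ ∀ v, ∃ o, v ∈ H o := by
  have hdual : 1 < finrank K (Dual K (V ⧸ W)) := by rwa [Subspace.dual_finrank_eq]
  have : Nontrivial (Dual K (V ⧸ W)) := nontrivial_of_finrank_pos (zero_lt_one.trans hdual)
  obtain ⟨f, hf⟩ := exists_ne (0 : Dual K (V ⧸ W))
  obtain ⟨g, hfg⟩ := exists_linearIndependent_pair_of_one_lt_finrank hdual hf
  let φ : Option K → Dual K (V ⧸ W) := fun o => o.elim f fun c => g - c • f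
  have hφ : ∀ o, φ o ≠ 0
    | none => hf
    | some c => fun h => by
      have := LinearIndependent.pair_iff.1 hfg (-c) 1 (by
        rw [← h, neg_smul, one_smul, neg_add_eq_sub]
        rfl)
      exact one_ne_zero this.2
  refine ⟨fun o => (φ o ∘ₗ W.mkQ).ker, fun o => ⟨fun w hw => ?_, fun h => hφ o ?_⟩, fun v => ?_⟩
  · simp [(Submodule.Quotient.mk_eq_zero W).2 hw]
  · exact W.linearMap_qext (LinearMap.ker_eq_top.1 h)
  · by_cases hv : f (W.mkQ v) = 0
    · exact ⟨none, hv⟩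
    · refine ⟨some (g (W.mkQ v) / f (W.mkQ v)), ?_⟩
      rw [LinearMap.mem_ker, LinearMap.comp_apply]
      change g _ - (g _ / f _) * f _ = 0
      rw [div_mul_cancel₀ _ hv, sub_self]

theorem exists_affineSubspace_pencil {s : Set E} (hs : s.Nonempty)
    (hcodim : 1 < finrank K (V ⧸ vectorSpan K s)) :
    ∃ H : Option K → AffineSubspace K E, (∀ o, s ⊆ H o ∧ H o ≠ ⊤) ∧ ∀ p, ∃ o, p ∈ H o := by
  obtain ⟨p₀, hp₀⟩ := hs
  obtain ⟨H, hH, hcover⟩ := exists_submodule_pencil hcodim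
  refine ⟨fun o => .mk' p₀ (H o), fun o => ⟨fun p hp => ?_, fun h => (hH o).2 ?_⟩, fun p => ?_⟩
  · exact AffineSubspace.mem_mk'.2 ((hH o).1 (vsub_mem_vectorSpan K hp hp₀))
  · exact (AffineSubspace.direction_mk' p₀ (H o)).symm.trans
      ((congrArg _ h).trans (AffineSubspace.direction_top K V E))
  · exact (hcover (p -ᵥ p₀)).imp fun o ho => AffineSubspace.mem_mk'.2 ho

end Pencil

section Supersaturation

theorem min_div_sub_one_pos {q N : ℝ} (hq : 0 < q) (hN : q < N) : 0 < min (N / q - 1) 1 :=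
  lt_min (sub_pos.2 ((one_lt_div hq).2 hN)) one_pos

theorem min_mul_sq_le {q n N D : ℝ} (hq : 1 ≤ q) (hqN : q ≤ N) (hD : 0 ≤ D) (hNn : N ≤ 2 * n)
    (hexcess : N - q ≤ 2 * (n - q - 1)) (h : n ^ 2 ≤ (q + 1) * (2 * D + n)) :
    min (N / q - 1) 1 * N ^ 2 ≤ 32 * q * D := by
  have hmin : min (N / q - 1) 1 * N ≤ 2 * (N - q) := by
    have hmin_q : min (N / q - 1) 1 * q ≤ N - q := by
      calc min (N / q - 1) 1 * q ≤ (N / q - 1) * q := by gcongr; exact min_le_left ..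
        _ = N - q := by field_simp
    have hmin_excess : min (N / q - 1) 1 * (N - q) ≤ N - q :=
      mul_le_of_le_one_left (by linarith) (min_le_right ..)
    linarith
  have hcount : n * (n - q - 1) ≤ 4 * q * D := by
    have hdouble : (q + 1) * (2 * D) ≤ 2 * q * (2 * D) := by gcongr; linarith
    linarith
  calc min (N / q - 1) 1 * N ^ 2 = N * (min (N / q - 1) 1 * N) := by ring
    _ ≤ N * (2 * (N - q)) := by gcongr; linarith
    _ ≤ (2 * n) * (2 * (2 * (n - q - 1))) := by gcongr; linarith
    _ = 8 * (n * (n - q - 1)) := by ring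
    _ ≤ 32 * q * D := by linarith

variable {K V E : Type*} [Field K] [Fintype K] [AddCommGroup V] [Module K V] [AddTorsor V E]
  [FiniteDimensional K V]

theorem sq_card_sub_le_mul_setDegree {X S : Finset E} (hSX : S ⊆ X) (hS : S.Nonempty)
    (hcard : #S + 1 = finrank K V) :
    (#X - #S) ^ 2 ≤ (Fintype.card K + 1) *
      (2 * setDegree (affineDependentSubsets K (finrank K V + 1) X) S + (#X - #S)) := by
  classical
  have hcodim : 1 < finrank K (V ⧸ vectorSpan K (S : Set E)) := by
    have := finrank_vectorSpan_add_one_le_card (K := K) hS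
    have := (vectorSpan K (S : Set E)).finrank_quotient_add_finrank
    omega
  obtain ⟨H, hH, hcover⟩ := exists_affineSubspace_pencil (coe_nonempty.2 hS) hcodim
  choose f hf using hcover
  have hpairs : ∀ o, ∀ p ∈ powersetCard 2 {x ∈ X \ S | f x = o},
      S ∪ p ∈ affineDependentSubsets K (finrank K V + 1) X := by
    intro o p hp
    obtain ⟨hpo, hp2⟩ := mem_powersetCard.1 hp
    have hpXS : p ⊆ X \ S := hpo.trans (filter_subset _ _)
    have hunion : #(S ∪ p) = finrank K V + 1 := by
      rw [card_union_of_disjoint (disjoint_sdiff.mono_right hpXS), hp2, ← hcard]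
    refine mem_affineDependentSubsets.2 ⟨union_subset hSX (hpXS.trans sdiff_subset), hunion,
      not_affineIndependent_of_subset_ne_top (hH o).2 ?_ hunion⟩
    rw [coe_union]
    exact Set.union_subset (hH o).1 fun x hx => (mem_filter.1 (hpo hx)).2 ▸ hf x
  have hsq := card_sq_le_card_mul_sum_choose_two (X \ S) f
  rw [card_sdiff_of_subset hSX, Fintype.card_option] at hsq
  refine hsq.trans ?_
  gcongr
  exact sum_choose_card_fiber_le_setDegree two_ne_zero disjoint_sdiff f hpairs

theorem min_mul_card_sq_le_setDegree {X S : Finset E} (hSX : S ⊆ X) (hS : S.Nonempty)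
    (hcard : #S + 1 = finrank K V) (hX : Fintype.card K + 2 * finrank K V ≤ #X) :
    min ((#X : ℝ) / Fintype.card K - 1) 1 * (#X : ℝ) ^ 2 ≤
      32 * Fintype.card K * setDegree (affineDependentSubsets K (finrank K V + 1) X) S := by
  have hq : 1 ≤ Fintype.card K := Fintype.card_pos
  obtain ⟨n, hn⟩ : ∃ n, #X = n + #S := ⟨#X - #S, by omega⟩
  have hcount := sq_card_sub_le_mul_setDegree (K := K) hSX hS hcard
  rw [show #X - #S = n by omega] at hcount
  have hXn : #X ≤ 2 * n := by omega
  have hexcess : #X + Fintype.card K + 2 ≤ 2 * n := by omega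
  have hqX : Fintype.card K ≤ #X := by omega
  rify at hq hcount hXn hexcess hqX
  exact min_mul_sq_le hq hqX (Nat.cast_nonneg _) hXn (by linarith) hcount

theorem min_mul_card_pow_le {X : Finset E} (hd : 2 ≤ finrank K V)
    (hX : Fintype.card K + 2 * finrank K V ≤ #X) :
    min ((#X : ℝ) / Fintype.card K - 1) 1 * (#X : ℝ) ^ (finrank K V + 1) ≤
      (32 * (finrank K V - 1) ^ (finrank K V - 1) *
          (finrank K V + 1).choose (finrank K V - 1) : ℕ) *
        Fintype.card K * #(affineDependentSubsets K (finrank K V + 1) X) := by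
  obtain ⟨k, hk⟩ : ∃ k, finrank K V = k + 1 := ⟨finrank K V - 1, by omega⟩
  set H := affineDependentSubsets K (finrank K V + 1) X
  set q : ℝ := (Fintype.card K : ℝ)
  set μ : ℝ := min ((#X : ℝ) / q - 1) 1
  have hμ : 0 ≤ μ := (min_div_sub_one_pos (by positivity) (Nat.cast_lt.2 (by omega))).le
  have hchoose : (#X : ℝ) ^ k ≤ (k ^ k : ℕ) * (#X).choose k := by
    exact_mod_cast pow_le_pow_mul_choose (by omega)
  have hdegree : (#X).choose k * (μ * (#X : ℝ) ^ 2) ≤ 32 * q * ((k + 1 + 1).choose k * #H : ℕ) := by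
    calc (#X).choose k * (μ * (#X : ℝ) ^ 2)
        = ∑ S ∈ X.powersetCard k, μ * (#X : ℝ) ^ 2 := by
          rw [sum_const, card_powersetCard, nsmul_eq_mul]
      _ ≤ ∑ S ∈ X.powersetCard k, 32 * q * setDegree H S := by
          refine sum_le_sum fun S hS => ?_
          obtain ⟨hSX, hSk⟩ := mem_powersetCard.1 hS
          exact min_mul_card_sq_le_setDegree hSX (card_pos.1 (by omega)) (by omega) hX
      _ = 32 * q * ((k + 1 + 1).choose k * #H : ℕ) := by
          rw [← mul_sum, ← Nat.cast_sum, sum_powersetCard_setDegree affineDependentSubsets_subset,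
            ← hk]
  rw [hk, Nat.add_sub_cancel]
  calc μ * (#X : ℝ) ^ (k + 1 + 1) = μ * (#X : ℝ) ^ 2 * (#X : ℝ) ^ k := by ring
    _ ≤ μ * (#X : ℝ) ^ 2 * ((k ^ k : ℕ) * (#X).choose k) := by gcongr
    _ = (k ^ k : ℕ) * ((#X).choose k * (μ * (#X : ℝ) ^ 2)) := by ring
    _ ≤ (k ^ k : ℕ) * (32 * q * ((k + 1 + 1).choose k * #H : ℕ)) := by gcongr
    _ = (32 * k ^ k * (k + 1 + 1).choose k : ℕ) * q * #H := by push_cast; ring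

theorem affineDependentSubsets_nonempty {X : Finset E} (hd : 2 ≤ finrank K V)
    (hX : Fintype.card K + 2 * finrank K V ≤ #X) :
    (affineDependentSubsets K (finrank K V + 1) X).Nonempty := by
  have hq : 0 < (Fintype.card K : ℝ) := by positivity
  have hqX : (Fintype.card K : ℝ) < #X := Nat.cast_lt.2 (by omega)
  have hlow := (mul_pos (min_div_sub_one_pos hq hqX)
    (pow_pos (hq.trans hqX) (finrank K V + 1))).trans_le (min_mul_card_pow_le hd hX)
  exact card_pos.1 (Nat.cast_pos.1 (pos_of_mul_pos_right hlow (by positivity)))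

end Supersaturation

section Parameters

variable {d : ℕ} {q μ N x A B h L : ℝ}

/-- The paper's `τ`, for a set of `N` points in a `d`-dimensional space over a field of `q`
elements, with `k = N / q`. -/
noncomputable def coplanarTau (d : ℕ) (q N : ℝ) : ℝ :=
  min (N / q - 1) 1 ^ (-(d : ℝ) / (d + 1)) * (N / q)⁻¹ * q ^ (-(1 : ℝ) / (d + 1))

theorem coplanarTau_pos (hq : 0 < q) (hN : q < N) : 0 < coplanarTau d q N := by
  have := min_div_sub_one_pos hq hN
  have : 0 < N := hq.trans hN
  unfold coplanarTau
  positivity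

theorem mul_coplanarTau_pow (hq : 0 < q) (hN : q < N) :
    (N * coplanarTau d q N) ^ (d + 1) * min (N / q - 1) 1 ^ d = q ^ d := by
  set μ := min (N / q - 1) 1 with hμ_def
  have hμ : 0 < μ := min_div_sub_one_pos hq hN
  have hroot {a e : ℝ} (ha : 0 < a) : (a ^ (e / (d + 1))) ^ (d + 1) = a ^ e := by
    rw [← Real.rpow_mul_natCast ha.le]
    congr 1
    push_cast
    field_simp
  have hN0 : N ≠ 0 := (hq.trans hN).ne'
  calc (N * coplanarTau d q N) ^ (d + 1) * μ ^ d
      = (q * μ ^ (-(d : ℝ) / (d + 1)) * q ^ (-(1 : ℝ) / (d + 1))) ^ (d + 1) * μ ^ d := by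
        rw [coplanarTau, ← hμ_def, inv_div]
        congr 2
        field_simp
    _ = q ^ (d + 1) * (μ ^ d)⁻¹ * q⁻¹ * μ ^ d := by
        rw [mul_pow, mul_pow, hroot hμ, hroot hq, Real.rpow_neg hμ.le, Real.rpow_natCast,
          Real.rpow_neg_one]
    _ = q ^ d := by
        rw [pow_succ]
        field_simp

/- In the inequalities below, `x` stands for `N * coplanarTau d q N`, `μ` for `min (N / q - 1) 1`
and `h` for the number of edges. -/

theorem one_le_of_pow_mul_pow_eq (hx : 0 ≤ x) (hμ : 0 ≤ μ) (hμ1 : μ ≤ 1) (hq : 1 ≤ q)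
    (hxq : x ^ (d + 1) * μ ^ d = q ^ d) : 1 ≤ x := by
  refine (one_le_pow_iff_of_nonneg hx d.succ_ne_zero).1 ?_
  calc 1 ≤ q ^ d := one_le_pow₀ hq
    _ = x ^ (d + 1) * μ ^ d := hxq.symm
    _ ≤ x ^ (d + 1) := mul_le_of_le_one_right (by positivity) (pow_le_one₀ hμ hμ1)

theorem le_mul_sq_of_pow_mul_pow_eq (hd : d ≠ 0) (hx : 1 ≤ x) (hμ : 0 ≤ μ)
    (hxq : x ^ (d + 1) * μ ^ d = q ^ d) : q ≤ μ * x ^ 2 := by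
  refine le_of_pow_le_pow_left₀ hd (by positivity) ?_
  calc q ^ d = x ^ (d + 1) * μ ^ d := hxq.symm
    _ ≤ x ^ (2 * d) * μ ^ d := by gcongr; omega
    _ = (μ * x ^ 2) ^ d := by rw [pow_mul, ← mul_pow, mul_comm]

theorem pow_le_mul_pow_of_mul_le (hμ : 0 < μ) (hB : 0 ≤ B) (hh : 0 ≤ h) (hx : 1 ≤ x)
    (hq : q ≤ μ * x ^ 2) {j n : ℕ} (hj : 2 ≤ j) (hlow : μ * N ^ n ≤ B * q * h) :
    N ^ n ≤ B * h * x ^ j := by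
  refine le_of_mul_le_mul_left ?_ hμ
  calc μ * N ^ n ≤ B * q * h := hlow
    _ ≤ B * (μ * x ^ j) * h := by
        gcongr
        exact hq.trans (by gcongr)
    _ = μ * (B * h * x ^ j) := by ring

theorem pow_mul_le_of_mul_le (hμ : 0 < μ) (hN : 0 ≤ N) (hA : 1 ≤ A) (hB : 1 ≤ B) (hh : 0 ≤ h)
    (hx : 0 ≤ x) (hL : 0 ≤ L) (hxq : x ^ (d + 1) * μ ^ d = q ^ d)
    (hlow : μ * N ^ (d + 1) ≤ B * q * h) (hLh : L ^ (d + 1) ≤ A * h) :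
    N ^ d * L ≤ A * B * h * x := by
  have hBqh : 0 ≤ B * q * h := le_trans (by positivity) hlow
  refine le_of_pow_le_pow_left₀ d.succ_ne_zero (by positivity) ?_
  refine le_of_mul_le_mul_left ?_ (pow_pos hμ d)
  calc μ ^ d * (N ^ d * L) ^ (d + 1) = (μ * N ^ (d + 1)) ^ d * L ^ (d + 1) := by ring
    _ ≤ (B * q * h) ^ d * (A * h) :=
        mul_le_mul (pow_le_pow_left₀ (by positivity) hlow d) hLh (by positivity)
          (pow_nonneg hBqh d)
    _ = A * B ^ d * h ^ (d + 1) * (x ^ (d + 1) * μ ^ d) := by rw [hxq]; ring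
    _ ≤ A ^ (d + 1) * B ^ (d + 1) * h ^ (d + 1) * (x ^ (d + 1) * μ ^ d) := by
        gcongr
        · exact le_self_pow₀ hA d.succ_ne_zero
        · exact d.le_succ
    _ = μ ^ d * (A * B * h * x) ^ (d + 1) := by ring

theorem le_mul_div_mul_pow_iff {c δ τ : ℝ} {i : ℕ} (hN : 0 < N) (hi : i ≠ 0) :
    δ ≤ c * (h / N) * τ ^ (i - 1) ↔ δ * N ^ i ≤ c * h * (N * τ) ^ (i - 1) := by
  have hrhs : c * h * (N * τ) ^ (i - 1) = c * (h / N) * τ ^ (i - 1) * N ^ i := by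
    rw [mul_pow, ← mul_pow_sub_one hi N]
    field_simp
  rw [hrhs, mul_le_mul_iff_left₀ (pow_pos hN i)]

theorem isBoundedHypergraph_coplanarTau {α : Type*} {X : Finset α} {H : Finset (Finset α)}
    (hH : H ⊆ X.powersetCard (d + 1)) (hd : 2 ≤ d) (hq : 1 ≤ q) (hqX : q < #X)
    (hA : 1 ≤ A) (hB : 1 ≤ B) (hlow : min (#X / q - 1) 1 * (#X : ℝ) ^ (d + 1) ≤ B * q * #H)
    (hpair : ∀ U ⊆ X, #U = 2 → ∃ L : ℕ,
      setDegree H U ≤ #X ^ (d - 2) * L ∧ (L : ℝ) ^ (d + 1) ≤ A * #H) :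
    IsBoundedHypergraph (d + 1) (A * B) (coplanarTau d q #X) X H := by
  intro i hi hid U hUX hU
  have hμ := min_div_sub_one_pos (by linarith) hqX
  have hxq := mul_coplanarTau_pow (d := d) (by linarith) hqX
  have hx0 : 0 ≤ #X * coplanarTau d q #X :=
    mul_nonneg (Nat.cast_nonneg _) (coplanarTau_pos (by linarith) hqX).le
  have hx := one_le_of_pow_mul_pow_eq hx0 hμ.le (min_le_right _ _) hq hxq
  rw [le_mul_div_mul_pow_iff (by linarith) (by omega)]
  set x := #X * coplanarTau d q #X
  rcases hi.eq_or_lt with rfl | hi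
  · obtain ⟨L, hdeg, hL⟩ := hpair U hUX hU
    rify at hdeg
    calc (setDegree H U : ℝ) * (#X : ℝ) ^ 2 ≤ (#X : ℝ) ^ (d - 2) * L * (#X : ℝ) ^ 2 := by gcongr
      _ = (#X : ℝ) ^ d * L := by rw [mul_right_comm, ← pow_add, Nat.sub_add_cancel hd]
      _ ≤ A * B * #H * x := pow_mul_le_of_mul_le hμ (Nat.cast_nonneg _) hA hB (Nat.cast_nonneg _)
          hx0 (Nat.cast_nonneg _) hxq hlow hL
      _ = A * B * #H * x ^ (2 - 1) := by rw [pow_one]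
  · have hdeg : (setDegree H U : ℝ) ≤ (#X : ℝ) ^ (d + 1 - i) := by
      exact_mod_cast hU ▸ setDegree_le_pow hH U
    have hqx := le_mul_sq_of_pow_mul_pow_eq (by omega) hx hμ.le hxq
    calc (setDegree H U : ℝ) * (#X : ℝ) ^ i ≤ (#X : ℝ) ^ (d + 1 - i) * (#X : ℝ) ^ i := by gcongr
      _ = (#X : ℝ) ^ (d + 1) := by rw [← pow_add, Nat.sub_add_cancel hid]
      _ ≤ B * #H * x ^ (i - 1) := pow_le_mul_pow_of_mul_le hμ (by linarith) (Nat.cast_nonneg _)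
          hx hqx (by omega) hlow
      _ ≤ A * B * #H * x ^ (i - 1) := by gcongr; exact le_mul_of_one_le_left (by linarith) hA

end Parameters

section CoplanarEdges

variable {F : Type*} [Field F] (d : ℕ) (P U : Finset (Fin d → F))

theorem coplanarEdges_eq : coplanarEdges F d P = affineDependentSubsets F (d + 1) P :=
  Set.ext fun _ => mem_affineDependentSubsets.symm

theorem ncard_coplanarEdges :
    (coplanarEdges F d P).ncard = #(affineDependentSubsets F (d + 1) P) := by
  rw [coplanarEdges_eq, Set.ncard_coe_finset]

theorem ncard_coplanarEdges_superset :
    {t ∈ coplanarEdges F d P | U ⊆ t}.ncard =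
      setDegree (affineDependentSubsets F (d + 1) P) U := by
  classical
  rw [coplanarEdges_eq, setDegree, ← Set.ncard_coe_finset, coe_filter]
  rfl

end CoplanarEdges

theorem coplanar_hypergraph_bounded_general.{u, v, w} (d : ℕ) (hd : 2 ≤ d) :
    ∃ c : ℝ, 0 < c ∧ ∀ (K : Type u) [Field K] [Fintype K] (V : Type v) [AddCommGroup V]
      [Module K V] (E : Type w) [AddTorsor V E], finrank K V = d →
        ∀ X : Finset E, Fintype.card K + 2 * d ≤ #X →
          IsBoundedHypergraph (d + 1) c (coplanarTau d (Fintype.card K) #X) X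
            (affineDependentSubsets K (d + 1) X) := by
  let A : ℕ := (d + 1) ^ (d + 1)
  let B : ℕ := 32 * (d - 1) ^ (d - 1) * (d + 1).choose (d - 1)
  have hA : 1 ≤ A := Nat.one_le_pow _ _ d.succ_pos
  have hB : 1 ≤ B :=
    Nat.mul_pos (Nat.mul_pos (by norm_num) Nat.pow_self_pos) (Nat.choose_pos (by omega))
  refine ⟨A * B, by exact_mod_cast Nat.mul_pos hA hB, ?_⟩
  intro K _ _ V _ _ E _ hfin X hX
  have : FiniteDimensional K V := Module.finite_of_finrank_pos (by omega)
  subst hfin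
  refine isBoundedHypergraph_coplanarTau affineDependentSubsets_subset hd
    (Nat.one_le_cast.2 Fintype.card_pos) (Nat.cast_lt.2 (by omega)) (Nat.one_le_cast.2 hA)
    (Nat.one_le_cast.2 hB) (min_mul_card_pow_le hd hX) fun U _ hU => ?_
  obtain ⟨L, hdeg, hL⟩ := exists_setDegree_le_pow_mul (affineIndependent_of_card_eq_two hU)
    (by omega) (affineDependentSubsets_nonempty hd hX)
  exact ⟨L, hU ▸ hdeg, by exact_mod_cast hL⟩

/-- For `|P| ≥ q + 2(d+1)`, the hypergraph of coplanar `(d+1)`-tuples in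
`P` is `(c,τ)`-bounded with `k = |P|/q` and
`τ = (min{k−1,1})^{−d/(d+1)} · k⁻¹ · q^{−1/(d+1)}`: for every `2 ≤ i ≤ d+1`, every
`i`-element subset `U` of `P` is contained in at most `c·(|H|/|P|)·τ^{i−1}` edges. -/
theorem coplanar_hypergraph_bounded (d : ℕ) (hd : 2 ≤ d) :
    ∃ c : ℝ, 0 < c ∧ ∀ q : ℕ, IsPrimePow q → 2 * (d + 1) ≤ q →
      ∀ (F : Type) [Field F] [Fintype F], Fintype.card F = q →
        ∀ P : Finset (Fin d → F), q + 2 * (d + 1) ≤ P.card →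
          ∀ i : ℕ, 2 ≤ i → i ≤ d + 1 →
            ∀ U : Finset (Fin d → F), U ⊆ P → U.card = i →
              (({t ∈ coplanarEdges F d P | U ⊆ t}).ncard : ℝ) ≤
                c * (((coplanarEdges F d P).ncard : ℝ) / (P.card : ℝ)) *
                  ((min ((P.card : ℝ) / (q : ℝ) - 1) 1) ^ (-(d : ℝ) / ((d : ℝ) + 1)) *
                    ((P.card : ℝ) / (q : ℝ))⁻¹ *
                    (q : ℝ) ^ (-(1 : ℝ) / ((d : ℝ) + 1))) ^ (i - 1) := by
  obtain ⟨c, hc, hbounded⟩ := coplanar_hypergraph_bounded_general d hd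
  refine ⟨c, hc, ?_⟩
  rintro q - - F _ _ rfl P hP i hi hid U hUP hU
  rw [ncard_coplanarEdges, ncard_coplanarEdges_superset]
  exact hbounded F (Fin d → F) (Fin d → F) (finrank_fin_fun F) P (by omega) i hi hid U hUP hU
end
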